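/- arXiv:1801.06148 — 4 statements merged into one kernel-verified Lean document; each statement's English description precedes it below -/
import Mathlib

section
/- For every dimension d ≥ 1, the minimal sphere covering number of ℝ^d with the ℓ^∞-norm (sup norm) equals 2: the points a_1 = (−1, 0, …, 0) and a_2 = (1, 0, …, 0) lie on the ℓ^∞-unit sphere and the ℓ^∞-unit sphere is covered by the two closed ℓ^∞-unit balls centered at a_1 and a_2, while a single point never suffices. -/
/- On `Fin d → ℝ`, the instance norm is the sup (`ℓ^∞`) norm `‖x‖ = max_i |x i|`. -/

/-- for every `d ≥ 1`, the minimal sphere covering number of `ℝ^d` with the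
`ℓ^∞`-norm equals `2`: the points `a₁ = (−1,0,…,0)` and `a₂ = (1,0,…,0)` lie on the unit sphere
and the two closed unit balls centered at them cover the unit sphere, while a single point
never suffices. -/
theorem stmt4 (d : ℕ) (hd : 1 ≤ d) :
    let a₁ : Fin d → ℝ := fun j => if (j : ℕ) = 0 then -1 else 0
    let a₂ : Fin d → ℝ := fun j => if (j : ℕ) = 0 then 1 else 0
    ‖a₁‖ = 1 ∧ ‖a₂‖ = 1 ∧
    (Metric.sphere (0 : Fin d → ℝ) 1 ⊆
      Metric.closedBall a₁ 1 ∪ Metric.closedBall a₂ 1) ∧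
    (∀ a : Fin d → ℝ, ‖a‖ = 1 → ¬ Metric.sphere (0 : Fin d → ℝ) 1 ⊆ Metric.closedBall a 1) ∧
    sInf {k | ∃ a : Fin k → Fin d → ℝ, (∀ i, ‖a i‖ = 1) ∧
      Metric.sphere (0 : Fin d → ℝ) 1 ⊆ ⋃ i, Metric.closedBall (a i) 1} = 2 := by
  intro a₁ a₂
  have h1 : ‖a₁‖ = 1 := by
    apply le_antisymm
    · refine (pi_norm_le_iff_of_nonneg zero_le_one).2 fun j => ?_
      simp only [a₁]
      split_ifs <;> simp
    · have h := norm_le_pi_norm a₁ ⟨0, hd⟩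
      simpa [a₁] using h
  have h2 : ‖a₂‖ = 1 := by
    apply le_antisymm
    · refine (pi_norm_le_iff_of_nonneg zero_le_one).2 fun j => ?_
      simp only [a₂]
      split_ifs <;> simp
    · have h := norm_le_pi_norm a₂ ⟨0, hd⟩
      simpa [a₂] using h
  have h3 : Metric.sphere (0 : Fin d → ℝ) 1 ⊆
      Metric.closedBall a₁ 1 ∪ Metric.closedBall a₂ 1 := by
    intro x hx
    have hx1 : ‖x‖ = 1 := by simpa using hx
    have hb : ∀ j, |x j| ≤ 1 := fun j => by
      have h := norm_le_pi_norm x j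
      rwa [hx1, Real.norm_eq_abs] at h
    rcases le_total (x ⟨0, hd⟩) 0 with h0 | h0
    · left
      rw [Metric.mem_closedBall, dist_pi_le_iff zero_le_one]
      intro j
      rw [Real.dist_eq]
      have hj := abs_le.1 (hb j)
      simp only [a₁]
      split_ifs with h
      · have e : j = ⟨0, hd⟩ := Fin.ext h
        subst e
        rw [abs_le]
        constructor <;> linarith
      · simpa using hb j
    · right
      rw [Metric.mem_closedBall, dist_pi_le_iff zero_le_one]
      intro j
      rw [Real.dist_eq]
      have hj := abs_le.1 (hb j)
      simp only [a₂]
      split_ifs with h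
      · have e : j = ⟨0, hd⟩ := Fin.ext h
        subst e
        rw [abs_le]
        constructor <;> linarith
      · simpa using hb j
  have h4 : ∀ a : Fin d → ℝ, ‖a‖ = 1 →
      ¬ Metric.sphere (0 : Fin d → ℝ) 1 ⊆ Metric.closedBall a 1 := by
    intro a ha hs
    have hm : -a ∈ Metric.sphere (0 : Fin d → ℝ) 1 := by simp [ha]
    have h := hs hm
    rw [Metric.mem_closedBall, dist_eq_norm] at h
    have e : -a - a = (-2 : ℝ) • a := by
      ext j
      simp only [Pi.sub_apply, Pi.neg_apply, Pi.smul_apply, smul_eq_mul]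
      ring
    rw [e, norm_smul, ha] at h
    norm_num at h
  refine ⟨h1, h2, h3, h4, ?_⟩
  apply le_antisymm
  · apply Nat.sInf_le
    refine ⟨![a₁, a₂], ?_, ?_⟩
    · intro i
      fin_cases i
      · exact h1
      · exact h2
    · intro x hx
      rw [Set.mem_iUnion]
      rcases h3 hx with h | h
      · exact ⟨0, h⟩
      · exact ⟨1, h⟩
  · apply le_csInf
    · refine ⟨2, ![a₁, a₂], ?_, ?_⟩
      · intro i
        fin_cases i
        · exact h1
        · exact h2
      · intro x hx
        rw [Set.mem_iUnion]
        rcases h3 hx with h | h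
        · exact ⟨0, h⟩
        · exact ⟨1, h⟩
    · rintro k ⟨a, ha, hs⟩
      by_contra hk
      have hm : a₁ ∈ Metric.sphere (0 : Fin d → ℝ) 1 := by simp [h1]
      obtain ⟨i, hi⟩ := Set.mem_iUnion.1 (hs hm)
      refine h4 (a i) (ha i) fun x hx => ?_
      obtain ⟨j, hj⟩ := Set.mem_iUnion.1 (hs hx)
      have e : j = i := Fin.ext (by omega)
      exact e ▸ hj
end

section
/- (Static characterization.) Let p ∈ [1, ∞), let ‖·‖ be a norm on ℝ^d, and let N be an integer with N ≥ c(d, ‖·‖) + 1, or N ≥ d + 2 if ‖·‖ is induced by an inner product. If μ and ν are Borel probability measures on ℝ^d with finite p-th moments and there is a real constant C such that e_{N,p}(μ, x)^p = e_{N,p}(ν, x)^p + C for every x ∈ (ℝ^d)^N, then μ = ν (and C = 0). -/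
open MeasureTheory
open scoped ENNReal NNReal

/-- The `L^p`-quantization error function at level `N`. -/
noncomputable def quantErr {E : Type*} [NormedAddCommGroup E] [MeasurableSpace E]
    (p : ℝ) (N : ℕ) (μ : Measure E) (x : Fin N → E) : ℝ :=
  (∫⁻ ξ, ⨅ i, (‖ξ - x i‖₊ : ℝ≥0∞) ^ p ∂μ).toReal ^ (1 / p)

/-- `μ` has a finite `p`-th moment. -/
def HasFiniteMoment {E : Type*} [NormedAddCommGroup E] [MeasurableSpace E]
    (p : ℝ) (μ : Measure E) : Prop :=
  ∫⁻ ξ, (‖ξ‖₊ : ℝ≥0∞) ^ p ∂μ ≠ ∞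

/-- The minimal sphere covering number `c(d, ‖·‖)`: smallest number of points on the unit
sphere whose closed unit balls cover the unit sphere. -/
noncomputable def coverNum (E : Type*) [NormedAddCommGroup E] : ℕ :=
  sInf {k | ∃ a : Fin k → E, (∀ i, a i ∈ Metric.sphere (0 : E) 1) ∧
    Metric.sphere (0 : E) 1 ⊆ ⋃ i, Metric.closedBall (a i) 1}


section helpers

variable {E : Type*} [NormedAddCommGroup E]

theorem aux_integrable [MeasurableSpace E] [BorelSpace E] [SecondCountableTopology E]
    (p : ℝ) (hp : 1 ≤ p) (μ : Measure E) [IsProbabilityMeasure μ]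
    (hμ : HasFiniteMoment p μ) (a : E) : Integrable (fun ξ => ‖ξ - a‖ ^ p) μ := by
  have hp0 : 0 < p := by linarith
  have h0 : ENNReal.ofReal p ≠ 0 := by simpa using hp0
  have h1 : MemLp (fun ξ : E => ξ) (ENNReal.ofReal p) μ := by
    refine ⟨continuous_id.aestronglyMeasurable, ?_⟩
    rw [eLpNorm_lt_top_iff_lintegral_rpow_enorm_lt_top h0 ENNReal.ofReal_ne_top,
      ENNReal.toReal_ofReal hp0.le]
    exact lt_top_iff_ne_top.2 hμ
  have h2 := (h1.sub (memLp_const a)).integrable_norm_rpow h0 ENNReal.ofReal_ne_top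
  simpa [ENNReal.toReal_ofReal hp0.le] using h2

theorem aux_cont_iInf {ι : Type*} [Fintype ι] [Nonempty ι] {X : Type*} [TopologicalSpace X]
    (f : ι → X → ℝ) (hf : ∀ i, Continuous (f i)) : Continuous (fun x => ⨅ i, f i x) := by
  have : (fun x => ⨅ i, f i x) =
      fun x => Finset.univ.inf' Finset.univ_nonempty (fun i => f i x) := by
    funext x
    rw [Finset.inf'_univ_eq_ciInf]
  rw [this]
  exact Continuous.finset_inf'_apply _ (fun i _ => hf i)

theorem aux_repr [MeasurableSpace E] [BorelSpace E]
    (p : ℝ) (hp : 1 ≤ p) (N : ℕ) [Nonempty (Fin N)] (μ : Measure E) (x : Fin N → E)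
    (hfin : ∫⁻ ξ, ⨅ i, (‖ξ - x i‖₊ : ℝ≥0∞) ^ p ∂μ ≠ ∞) :
    quantErr p N μ x ^ p = ∫ ξ, ⨅ i, ‖ξ - x i‖ ^ p ∂μ := by
  have hp0 : 0 < p := by linarith
  have hne : ∀ ξ : E, ∀ i, (‖ξ - x i‖₊ : ℝ≥0∞) ^ p ≠ ∞ := fun ξ i =>
    ENNReal.rpow_ne_top_of_nonneg hp0.le ENNReal.coe_ne_top
  unfold quantErr
  rw [← Real.rpow_mul ENNReal.toReal_nonneg, one_div_mul_cancel hp0.ne', Real.rpow_one,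
    ← integral_toReal]
  · congr 1
    funext ξ
    rw [ENNReal.toReal_iInf (hne ξ)]
    congr 1
    funext i
    simp [← ENNReal.toReal_rpow]
  · refine Measurable.aemeasurable (Measurable.iInf fun i => ?_)
    have : Measurable (fun ξ : E => ‖ξ - x i‖₊) := by
      exact Continuous.measurable (by fun_prop)
    exact (measurable_coe_nnreal_ennreal.comp this).pow_const p
  · refine Filter.Eventually.of_forall fun ξ => ?_
    obtain ⟨i⟩ := ‹Nonempty (Fin N)›
    exact lt_of_le_of_lt (iInf_le _ i) (lt_top_iff_ne_top.2 (hne ξ i))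

theorem aux_fin [MeasurableSpace E] [BorelSpace E] [SecondCountableTopology E]
    (p : ℝ) (hp : 1 ≤ p) (N : ℕ) [Nonempty (Fin N)] (μ : Measure E) [IsProbabilityMeasure μ]
    (hμ : HasFiniteMoment p μ) (x : Fin N → E) :
    ∫⁻ ξ, ⨅ i, (‖ξ - x i‖₊ : ℝ≥0∞) ^ p ∂μ ≠ ∞ := by
  have hp0 : 0 < p := by linarith
  obtain ⟨i⟩ := ‹Nonempty (Fin N)›
  refine ne_top_of_le_ne_top (b := ∫⁻ ξ, (‖ξ - x i‖₊ : ℝ≥0∞) ^ p ∂μ) ?_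
    (lintegral_mono fun ξ => iInf_le _ i)
  have h := (aux_integrable p hp μ hμ (x i)).2
  rw [hasFiniteIntegral_iff_enorm] at h
  refine ne_of_lt (lt_of_le_of_lt (le_of_eq ?_) h)
  congr 1
  funext ξ
  rw [Real.enorm_rpow_of_nonneg (norm_nonneg _) hp0.le]
  simp [enorm]

theorem aux_int_iInf [MeasurableSpace E] [BorelSpace E] [SecondCountableTopology E]
    (p : ℝ) (hp : 1 ≤ p) {ι : Type*} [Fintype ι] [Nonempty ι]
    (μ : Measure E) [IsProbabilityMeasure μ]
    (hμ : HasFiniteMoment p μ) (y : ι → E) :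
    Integrable (fun ξ => ⨅ i, ‖ξ - y i‖ ^ p) μ := by
  have hp0 : 0 ≤ p := by linarith
  obtain ⟨i⟩ := ‹Nonempty ι›
  refine (aux_integrable p hp μ hμ (y i)).mono' ?_ ?_
  · haveI : Nonempty ι := ⟨i⟩
    refine Continuous.aestronglyMeasurable (aux_cont_iInf _ fun i => ?_)
    exact Continuous.rpow_const (by fun_prop) (fun _ => Or.inr hp0)
  · refine Filter.Eventually.of_forall fun ξ => ?_
    have h0 : 0 ≤ ⨅ i, ‖ξ - y i‖ ^ p := Real.iInf_nonneg fun i => by positivity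
    rw [Real.norm_of_nonneg h0]
    exact ciInf_le (Set.finite_range _).bddBelow i

/-- The approximate-identity argument. -/
theorem aux_ext [NormedSpace ℝ E] [FiniteDimensional ℝ E] [MeasurableSpace E] [BorelSpace E]
    (μ ν : Measure E) [IsProbabilityMeasure μ] [IsProbabilityMeasure ν]
    (φ : E → ℝ) (hc : Continuous φ) (hs : HasCompactSupport φ) (h0 : 0 ≤ φ) (h1 : φ 0 ≠ 0)
    (h : ∀ (x : E) (r : ℝ), 0 < r →
      ∫ ξ, φ (r⁻¹ • (ξ - x)) ∂μ = ∫ ξ, φ (r⁻¹ • (ξ - x)) ∂ν) : μ = ν := by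
  haveI : ProperSpace E := FiniteDimensional.proper_real E
  let lam : Measure E := Measure.addHaar
  have hcpos : 0 < ∫ u, φ u ∂lam :=
    hc.integral_pos_of_hasCompactSupport_nonneg_nonzero hs h0 h1
  have hφi : Integrable φ lam := hc.integrable_of_hasCompactSupport hs
  obtain ⟨K, hK⟩ := hc.bounded_above_of_compact_support hs
  refine Measure.ext_of_integral_eq_on_compactlySupported fun g => ?_
  have hgc : Continuous (g : E → ℝ) := g.continuous
  have hgi : Integrable (g : E → ℝ) lam := hgc.integrable_of_hasCompactSupport g.hasCompactSupport
  obtain ⟨G, hG⟩ := hgc.bounded_above_of_compact_support g.hasCompactSupport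
  have hG0 : 0 ≤ G := (norm_nonneg _).trans (hG 0)
  have key1 : ∀ (m : Measure E) [IsProbabilityMeasure m] (r : ℝ), 0 < r →
      ∫ ξ, ∫ u, g (ξ - r • u) * φ u ∂lam ∂m =
      |(r ^ Module.finrank ℝ E)⁻¹| * ∫ x, g x * ∫ ξ, φ (r⁻¹ • (ξ - x)) ∂m ∂lam := by
    intro m _ r hr
    have e1 : ∀ ξ : E, ∫ u, g (ξ - r • u) * φ u ∂lam =
        |(r ^ Module.finrank ℝ E)⁻¹| * ∫ x, g x * φ (r⁻¹ • (ξ - x)) ∂lam := by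
      intro ξ
      have a1 := Measure.integral_comp_smul lam (fun w => g (ξ - w) * φ (r⁻¹ • w)) r
      have a2 := integral_sub_left_eq_self (fun w => g (ξ - w) * φ (r⁻¹ • w)) lam ξ
      simp only [sub_sub_cancel] at a2
      rw [← a2] at a1
      simpa [smul_smul, inv_mul_cancel₀ hr.ne'] using a1
    simp_rw [e1]
    rw [integral_const_mul]
    congr 1
    rw [integral_integral_swap]
    · simp_rw [integral_const_mul]
    · have hb : Integrable (fun z : E × E => K * ‖g z.2‖) (m.prod lam) := by
        have := (integrable_const (μ := m) K).mul_prod hgi.norm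
        simpa using this
      refine hb.mono' ?_ ?_
      · refine Continuous.aestronglyMeasurable ?_
        have : Continuous (fun z : E × E => g z.2 * φ (r⁻¹ • (z.1 - z.2))) := by fun_prop
        exact this
      · refine Filter.Eventually.of_forall fun z => ?_
        simp only [Function.uncurry, norm_mul]
        rw [mul_comm]
        gcongr
        exact hK _
  have key2 : ∀ (m : Measure E) [IsProbabilityMeasure m],
      Filter.Tendsto (fun n : ℕ => ∫ ξ, ∫ u, g (ξ - (1 / ((n : ℝ) + 1)) • u) * φ u ∂lam ∂m)
        Filter.atTop (nhds ((∫ ξ, g ξ ∂m) * ∫ u, φ u ∂lam)) := by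
    intro m _
    have e : (∫ ξ, g ξ ∂m) * ∫ u, φ u ∂lam = ∫ ξ, ∫ u, g ξ * φ u ∂lam ∂m := by
      simp_rw [integral_const_mul]
      rw [integral_mul_const]
    rw [e]
    have hbd : ∀ ξ (r : ℝ) u, ‖g (ξ - r • u) * φ u‖ ≤ G * ‖φ u‖ := by
      intro ξ r u
      rw [norm_mul]
      gcongr
      exact hG _
    refine tendsto_integral_of_dominated_convergence (fun _ => G * ∫ u, ‖φ u‖ ∂lam) ?_
      (integrable_const _) ?_ ?_
    · intro n
      refine Continuous.aestronglyMeasurable ?_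
      refine continuous_of_dominated (bound := fun u => G * ‖φ u‖) ?_ ?_ (hφi.norm.const_mul _) ?_
      · intro ξ
        exact Continuous.aestronglyMeasurable (by fun_prop)
      · intro ξ
        exact Filter.Eventually.of_forall fun u => hbd ξ _ u
      · exact Filter.Eventually.of_forall fun u => by fun_prop
    · intro n
      refine Filter.Eventually.of_forall fun ξ => ?_
      rw [← integral_const_mul]
      exact norm_integral_le_of_norm_le (hφi.norm.const_mul _)
        (Filter.Eventually.of_forall fun u => hbd ξ _ u)
    · refine Filter.Eventually.of_forall fun ξ => ?_
      refine tendsto_integral_of_dominated_convergence (fun u => G * ‖φ u‖) ?_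
        (hφi.norm.const_mul _) ?_ ?_
      · intro n
        exact Continuous.aestronglyMeasurable (by fun_prop)
      · intro n
        exact Filter.Eventually.of_forall fun u => hbd ξ _ u
      · refine Filter.Eventually.of_forall fun u => ?_
        have hr : Filter.Tendsto (fun n : ℕ => 1 / ((n : ℝ) + 1)) Filter.atTop (nhds 0) :=
          tendsto_one_div_add_atTop_nhds_zero_nat
        have hk : Continuous (fun r : ℝ => g (ξ - r • u) * φ u) := by fun_prop
        have := (hk.tendsto 0).comp hr
        simpa [Function.comp_def] using this
  have t1 := key2 μ
  have t2 := key2 ν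
  have e : ∀ n : ℕ, ∫ ξ, ∫ u, g (ξ - (1 / ((n : ℝ) + 1)) • u) * φ u ∂lam ∂μ =
      ∫ ξ, ∫ u, g (ξ - (1 / ((n : ℝ) + 1)) • u) * φ u ∂lam ∂ν := by
    intro n
    have hr : 0 < 1 / ((n : ℝ) + 1) := by positivity
    rw [key1 μ _ hr, key1 ν _ hr]
    simp_rw [h _ _ hr]
  simp_rw [e] at t1
  exact mul_right_cancel₀ hcpos.ne' (tendsto_nhds_unique t1 t2)

theorem aux_core [NormedSpace ℝ E] [FiniteDimensional ℝ E] [MeasurableSpace E] [BorelSpace E]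
    (p : ℝ) (hp : 1 ≤ p) (N : ℕ)
    (μ ν : Measure E) [IsProbabilityMeasure μ] [IsProbabilityMeasure ν]
    (hμ : HasFiniteMoment p μ) (hν : HasFiniteMoment p ν)
    (C : ℝ) (hC : ∀ x : Fin N → E, quantErr p N μ x ^ p = quantErr p N ν x ^ p + C)
    {ι : Type*} [Fintype ι] [Nonempty ι] (hcard : Fintype.card ι + 1 ≤ N)
    (a : ι → E) (ha : ∀ i, a i ≠ 0) (R : ℝ)
    (hR : ∀ u : E, R ≤ ‖u‖ → ∃ i, ‖u - a i‖ ≤ ‖u‖) : μ = ν := by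
  haveI : ProperSpace E := FiniteDimensional.proper_real E
  have hp0 : 0 < p := by linarith
  haveI : Nonempty (Fin N) := ⟨⟨0, by omega⟩⟩
  obtain ⟨f, hf⟩ : ∃ f : Fin N → Option ι, Function.Surjective f := by
    have : Nonempty (Option ι ↪ Fin N) := by
      apply Function.Embedding.nonempty_of_card_le
      simpa using hcard
    obtain ⟨e⟩ := this
    exact ⟨Function.invFun e, Function.invFun_surjective e.injective⟩
  -- the constant-difference relation for configurations indexed by `Option ι`
  have hO : ∀ z : Option ι → E, ∫ ξ, ⨅ o, ‖ξ - z o‖ ^ p ∂μ = ∫ ξ, ⨅ o, ‖ξ - z o‖ ^ p ∂ν + C := by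
    intro z
    have := hC (z ∘ f)
    rw [aux_repr p hp N μ _ (aux_fin p hp N μ hμ _),
      aux_repr p hp N ν _ (aux_fin p hp N ν hν _)] at this
    have e : ∀ ξ : E, ⨅ i, ‖ξ - (z ∘ f) i‖ ^ p = ⨅ o, ‖ξ - z o‖ ^ p := fun ξ =>
      hf.iInf_comp (fun o => ‖ξ - z o‖ ^ p)
    simpa only [e] using this
  have hι : ∀ y : ι → E, ∫ ξ, ⨅ i, ‖ξ - y i‖ ^ p ∂μ = ∫ ξ, ⨅ i, ‖ξ - y i‖ ^ p ∂ν + C := by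
    intro y
    let i0 : ι := Classical.arbitrary ι
    have hs : Function.Surjective (fun o : Option ι => o.getD i0) := fun i => ⟨some i, rfl⟩
    have := hO (fun o => y (o.getD i0))
    have e : ∀ ξ : E, ⨅ o : Option ι, ‖ξ - y (o.getD i0)‖ ^ p = ⨅ i, ‖ξ - y i‖ ^ p := fun ξ =>
      hs.iInf_comp (fun i => ‖ξ - y i‖ ^ p)
    simpa only [e] using this
  have hopt : ∀ w : Option ι → ℝ, ⨅ o, w o = min (⨅ i, w (some i)) (w none) := by
    intro w
    apply le_antisymm
    · refine le_min (le_ciInf fun i => ciInf_le (Set.finite_range _).bddBelow _)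
        (ciInf_le (Set.finite_range _).bddBelow _)
    · refine le_ciInf fun o => ?_
      cases o with
      | none => exact min_le_right _ _
      | some i => exact (min_le_left _ _).trans (ciInf_le (Set.finite_range _).bddBelow i)
  let A : E → ℝ := fun u => ⨅ i, ‖u - a i‖ ^ p
  have hA : Continuous A := aux_cont_iInf _ fun i =>
    Continuous.rpow_const (by fun_prop) (fun _ => Or.inr hp0.le)
  have hB : Continuous (fun u : E => ‖u‖ ^ p) :=
    Continuous.rpow_const (by fun_prop) (fun _ => Or.inr hp0.le)
  refine aux_ext μ ν (fun u => A u - min (A u) (‖u‖ ^ p)) (hA.sub (hA.min hB)) ?_ ?_ ?_ ?_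
  · refine HasCompactSupport.of_support_subset_isCompact (isCompact_closedBall (0 : E) R) ?_
    intro u hu
    by_contra hcon
    simp only [Metric.mem_closedBall, dist_zero_right, not_le] at hcon
    obtain ⟨i, hi⟩ := hR u hcon.le
    apply hu
    have : A u ≤ ‖u‖ ^ p :=
      (ciInf_le (Set.finite_range _).bddBelow i).trans
        (Real.rpow_le_rpow (norm_nonneg _) hi hp0.le)
    simp [this]
  · intro u
    simp
  · have hA0 : 0 < A 0 := by
      obtain ⟨i, hi⟩ := exists_eq_ciInf_of_finite (f := fun i => ‖(0 : E) - a i‖ ^ p)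
      show 0 < ⨅ i, ‖(0 : E) - a i‖ ^ p
      rw [← hi]
      have : 0 < ‖(0 : E) - a i‖ := by simpa using ha i
      positivity
    simp only [norm_zero, Real.zero_rpow hp0.ne', min_eq_right hA0.le, sub_zero]
    exact hA0.ne'
  · intro x r hr
    let y : ι → E := fun i => x + r • a i
    let z : Option ι → E := fun o => o.elim x y
    have hrp : 0 < r ^ p := Real.rpow_pos_of_pos hr p
    have sc : ∀ v : E, ‖r • v‖ ^ p = r ^ p * ‖v‖ ^ p := by
      intro v
      rw [norm_smul, Real.norm_of_nonneg hr.le, Real.mul_rpow hr.le (norm_nonneg _)]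
    have eu : ∀ ξ : E, ξ - x = r • (r⁻¹ • (ξ - x)) := fun ξ => by
      rw [smul_smul, mul_inv_cancel₀ hr.ne', one_smul]
    have ey : ∀ ξ : E, ⨅ i, ‖ξ - y i‖ ^ p = r ^ p * A (r⁻¹ • (ξ - x)) := by
      intro ξ
      show _ = r ^ p * ⨅ i, ‖r⁻¹ • (ξ - x) - a i‖ ^ p
      rw [Real.mul_iInf_of_nonneg hrp.le]
      congr 1
      funext i
      rw [← sc, smul_sub, ← eu]
      simp only [y]
      congr 2
      abel
    have ez : ∀ ξ : E, ⨅ o, ‖ξ - z o‖ ^ p =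
        r ^ p * min (A (r⁻¹ • (ξ - x))) (‖r⁻¹ • (ξ - x)‖ ^ p) := by
      intro ξ
      rw [hopt, mul_min_of_nonneg _ _ hrp.le, ← ey, ← sc, ← eu]
      rfl
    have main : ∀ (m : Measure E) [IsProbabilityMeasure m], HasFiniteMoment p m →
        r ^ p * ∫ ξ, (A (r⁻¹ • (ξ - x)) - min (A (r⁻¹ • (ξ - x))) (‖r⁻¹ • (ξ - x)‖ ^ p)) ∂m =
        ∫ ξ, ⨅ i, ‖ξ - y i‖ ^ p ∂m - ∫ ξ, ⨅ o, ‖ξ - z o‖ ^ p ∂m := by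
      intro m _ hm
      rw [← integral_sub (aux_int_iInf p hp m hm y) (aux_int_iInf p hp m hm z),
        ← integral_const_mul]
      congr 1
      funext ξ
      rw [ey, ez, mul_sub]
    have m1 := main μ hμ
    have m2 := main ν hν
    rw [hι, hO] at m1
    exact mul_left_cancel₀ hrp.ne' (by rw [m1, m2]; ring)

theorem aux_inner (E : Type*) [NormedAddCommGroup E] [InnerProductSpace ℝ E]
    [FiniteDimensional ℝ E] [Nontrivial E] :
    ∃ (a : Option (Fin (Module.finrank ℝ E)) → E) (R : ℝ), (∀ i, a i ≠ 0) ∧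
      ∀ u : E, R ≤ ‖u‖ → ∃ i, ‖u - a i‖ ≤ ‖u‖ := by
  let d := Module.finrank ℝ E
  have hd : 0 < d := Module.finrank_pos
  let b := stdOrthonormalBasis ℝ E
  have hin : ∀ u v : E, ‖u‖ < ‖u - v‖ → 2 * inner ℝ u v < ‖v‖ ^ 2 := by
    intro u v h
    have h1 := norm_sub_sq_real u v
    have h2 : ‖u‖ ^ 2 < ‖u - v‖ ^ 2 := by gcongr
    linarith
  have hs : ‖∑ j, b j‖ ^ 2 = d := by
    rw [← b.sum_sq_norm_inner_right]
    have : ∀ i, inner ℝ (b i) (∑ j, b j) = (1 : ℝ) := by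
      intro i
      rw [inner_sum]
      simp [b.inner_eq_ite]
    simp [this, d]
  refine ⟨fun o => o.elim (-∑ j, b j) b, d * d + 1, ?_, ?_⟩
  · intro o
    cases o with
    | none =>
      simp only [Option.elim, ne_eq, neg_eq_zero]
      intro h0
      rw [h0] at hs
      have hd' : (0 : ℝ) < d := by exact_mod_cast hd
      rw [← hs] at hd'
      simp at hd'
    | some i =>
      exact b.orthonormal.ne_zero i
  · intro u hu
    by_contra hcon
    push Not at hcon
    have hj : ∀ j, inner ℝ u (b j) < (1 / 2 : ℝ) := by
      intro j
      have := hin u _ (hcon (some j))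
      simp only [Option.elim, b.norm_eq_one] at this
      linarith
    have hsum : -(2 * ∑ j, inner ℝ u (b j)) < (d : ℝ) := by
      have := hin u _ (hcon none)
      simp only [Option.elim, norm_neg, hs, inner_neg_right, inner_sum] at this
      linarith
    have habs : ∀ j, ‖(inner ℝ u (b j) : ℝ)‖ ≤ d := by
      intro j
      have hd1 : (1 : ℝ) ≤ d := by exact_mod_cast hd
      have h3 : ∑ k ∈ Finset.univ.erase j, (inner ℝ u (b k) : ℝ) ≤ d * (1 / 2) := by
        calc _ ≤ ∑ k ∈ Finset.univ.erase j, (1 / 2 : ℝ) :=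
              Finset.sum_le_sum fun k _ => (hj k).le
          _ ≤ ∑ k : Fin (Module.finrank ℝ E), (1 / 2 : ℝ) :=
              Finset.sum_le_sum_of_subset_of_nonneg (Finset.erase_subset _ _)
                (fun _ _ _ => by norm_num)
          _ = _ := by simp [d]
      have h4 := Finset.add_sum_erase Finset.univ (fun k => (inner ℝ u (b k) : ℝ))
        (Finset.mem_univ j)
      rw [Real.norm_eq_abs, abs_le]
      constructor
      · linarith
      · linarith [hj j]
    have hu2 : ‖u‖ ≤ d * d := by
      calc ‖u‖ = ‖∑ j, (inner ℝ (b j) u : ℝ) • b j‖ := by rw [b.sum_repr']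
        _ ≤ ∑ j, ‖(inner ℝ (b j) u : ℝ) • b j‖ := norm_sum_le _ _
        _ ≤ ∑ j : Fin (Module.finrank ℝ E), (d : ℝ) := by
            refine Finset.sum_le_sum fun j _ => ?_
            rw [norm_smul, b.norm_eq_one, mul_one, real_inner_comm]
            exact habs j
        _ = d * d := by simp [d]
    linarith

theorem aux_inner' (E : Type*) [NormedAddCommGroup E] [NormedSpace ℝ E]
    [FiniteDimensional ℝ E] [Nontrivial E] (h : Nonempty (InnerProductSpace ℝ E)) :
    ∃ (a : Option (Fin (Module.finrank ℝ E)) → E) (R : ℝ), (∀ i, a i ≠ 0) ∧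
      ∀ u : E, R ≤ ‖u‖ → ∃ i, ‖u - a i‖ ≤ ‖u‖ := by
  have par : ∀ x y : E,
      ‖x + y‖ * ‖x + y‖ + ‖x - y‖ * ‖x - y‖ = 2 * (‖x‖ * ‖x‖ + ‖y‖ * ‖y‖) := by
    obtain ⟨i⟩ := h
    intro x y
    have := @parallelogram_law_with_norm ℝ E _ _ i x y
    simpa only [pow_two] using this
  exact @aux_inner E _ (InnerProductSpace.ofNorm (𝕜 := ℝ) par) _ _

theorem aux_cover (E : Type*) [NormedAddCommGroup E] [NormedSpace ℝ E]
    [FiniteDimensional ℝ E] :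
    ∃ a : Fin (coverNum E) → E, (∀ i, a i ≠ 0) ∧
      ∀ u : E, 1 ≤ ‖u‖ → ∃ i, ‖u - a i‖ ≤ ‖u‖ := by
  haveI : ProperSpace E := FiniteDimensional.proper_real E
  have hne : {k | ∃ a : Fin k → E, (∀ i, a i ∈ Metric.sphere (0 : E) 1) ∧
    Metric.sphere (0 : E) 1 ⊆ ⋃ i, Metric.closedBall (a i) 1}.Nonempty := by
    obtain ⟨t, ht, htf, hc⟩ := (isCompact_sphere (0 : E) 1).finite_cover_balls zero_lt_one
    haveI := htf.fintype
    refine ⟨Fintype.card t, fun i => ((Fintype.equivFin t).symm i : E),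
      fun i => ht (Subtype.mem _), ?_⟩
    intro v hv
    have := hc hv
    simp only [Set.mem_iUnion, exists_prop] at this ⊢
    obtain ⟨w, hw, hvw⟩ := this
    exact ⟨Fintype.equivFin t ⟨w, hw⟩, by simpa using Metric.ball_subset_closedBall hvw⟩
  obtain ⟨a, ha, hc⟩ := Nat.sInf_mem hne
  refine ⟨a, fun i h0 => ?_, ?_⟩
  · have := ha i
    rw [h0] at this
    simp at this
  · intro u hu
    have hu0 : 0 < ‖u‖ := by linarith
    have hv : ‖u‖⁻¹ • u ∈ Metric.sphere (0 : E) 1 := by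
      simp [norm_smul, inv_mul_cancel₀ hu0.ne']
    have := hc hv
    simp only [Set.mem_iUnion, Metric.mem_closedBall, dist_eq_norm] at this
    obtain ⟨i, hi⟩ := this
    refine ⟨i, ?_⟩
    have e : u - a i = (1 - ‖u‖⁻¹) • u + (‖u‖⁻¹ • u - a i) := by
      rw [sub_smul, one_smul]; abel
    have hle : ‖u‖⁻¹ ≤ 1 := inv_le_one_of_one_le₀ hu
    calc ‖u - a i‖ ≤ ‖(1 - ‖u‖⁻¹) • u‖ + ‖‖u‖⁻¹ • u - a i‖ := by
          conv_lhs => rw [e]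
          exact norm_add_le _ _
      _ ≤ (1 - ‖u‖⁻¹) * ‖u‖ + 1 := by
          rw [norm_smul, Real.norm_of_nonneg (by linarith)]
          gcongr
      _ = ‖u‖ := by rw [sub_mul, inv_mul_cancel₀ hu0.ne']; ring

end helpers

/-- static characterization: on `ℝ^d` (a finite-dimensional real normed space)
with `p ∈ [1, ∞)` and `N ≥ c(d, ‖·‖) + 1` (or `N ≥ d + 2` when the norm comes from an inner
product), if `e_{N,p}(μ, ·)^p = e_{N,p}(ν, ·)^p + C` for probability measures `μ, ν` with
finite `p`-th moments, then `μ = ν` and `C = 0`. -/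
theorem stmt6 {E : Type*} [NormedAddCommGroup E] [NormedSpace ℝ E]
    [FiniteDimensional ℝ E] [MeasurableSpace E] [BorelSpace E]
    (p : ℝ) (hp : 1 ≤ p) (N : ℕ)
    (hN : coverNum E + 1 ≤ N ∨
      (Nonempty (InnerProductSpace ℝ E) ∧ Module.finrank ℝ E + 2 ≤ N))
    (μ ν : Measure E) [IsProbabilityMeasure μ] [IsProbabilityMeasure ν]
    (hμ : HasFiniteMoment p μ) (hν : HasFiniteMoment p ν)
    (C : ℝ) (hC : ∀ x : Fin N → E, quantErr p N μ x ^ p = quantErr p N ν x ^ p + C) :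
    μ = ν ∧ C = 0 := by
  have hmain : μ = ν := by
    rcases subsingleton_or_nontrivial E with hE | hE
    · refine Measure.ext fun s _ => ?_
      rcases Set.eq_empty_or_nonempty s with rfl | hs
      · simp
      · rw [hs.eq_univ]
        simp
    · rcases hN with hN | ⟨hI, hN⟩
      · obtain ⟨a, ha, hR⟩ := aux_cover E
        obtain ⟨u, hu⟩ := exists_norm_eq E zero_le_one
        haveI : Nonempty (Fin (coverNum E)) := ⟨(hR u hu.ge).choose⟩
        exact aux_core p hp N μ ν hμ hν C hC (by simpa using hN) a ha 1 hR
      · obtain ⟨a, R, ha, hR⟩ := aux_inner' E hI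
        exact aux_core p hp N μ ν hμ hν C hC (by simp; omega) a ha R hR
  refine ⟨hmain, ?_⟩
  have := hC (fun _ => 0)
  rw [hmain] at this
  linarith
end

section
/- (W_p-convergence characterization on ℝ^d.) Let p ∈ [1, ∞) and let ‖·‖ be any norm on ℝ^d. Let μ_n (n ≥ 1) and μ_∞ be Borel probability measures on ℝ^d with finite p-th moments. The following are equivalent: (i) W_p(μ_n, μ_∞) → 0 as n → ∞; (ii) for every N ≥ 1, e_{N,p}(μ_n, ·) → e_{N,p}(μ_∞, ·) uniformly on (ℝ^d)^N; (iii) there exists N with N ≥ c(d, ‖·‖) + 1 (or N ≥ d + 2 if ‖·‖ is induced by an inner product) such that e_{N,p}(μ_n, ·) → e_{N,p}(μ_∞, ·) pointwise on (ℝ^d)^N. -/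
open MeasureTheory Filter Topology
open scoped ENNReal NNReal

/-- The `L^p`-Wasserstein distance. -/
noncomputable def wassersteinDist {E : Type*} [NormedAddCommGroup E] [MeasurableSpace E]
    (p : ℝ) (μ ν : Measure E) : ℝ :=
  (⨅ π ∈ {π : Measure (E × E) | π.map Prod.fst = μ ∧ π.map Prod.snd = ν},
      ∫⁻ q, (‖q.1 - q.2‖₊ : ℝ≥0∞) ^ p ∂π).toReal ^ (1 / p)

namespace QuantAux

/-- distance to the finite grid -/
noncomputable def gd {E : Type*} [NormedAddCommGroup E] {N : ℕ} (x : Fin N → E) (z : E) : ℝ :=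
  Metric.infDist z (Set.range x)

section geom
variable {E : Type*} [NormedAddCommGroup E] {N : ℕ}

lemma gd_nonneg (x : Fin N → E) (z : E) : 0 ≤ gd x z := Metric.infDist_nonneg

lemma gd_le (x : Fin N → E) (z : E) (i : Fin N) : gd x z ≤ ‖z - x i‖ := by
  rw [← dist_eq_norm]
  exact Metric.infDist_le_dist_of_mem ⟨i, rfl⟩

lemma gd_attained (hN : 1 ≤ N) (x : Fin N → E) (z : E) : ∃ i, gd x z = ‖z - x i‖ := by
  obtain ⟨y, ⟨i, rfl⟩, hy⟩ := (Set.finite_range x).isCompact.exists_infDist_eq_dist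
    ⟨x ⟨0, hN⟩, ⟨_, rfl⟩⟩ z
  exact ⟨i, by rw [← dist_eq_norm]; exact hy⟩

lemma gd_lip (x : Fin N → E) (z w : E) : |gd x z - gd x w| ≤ ‖z - w‖ := by
  rw [abs_le, ← dist_eq_norm]
  constructor
  · have := Metric.infDist_le_infDist_add_dist (x := w) (y := z) (s := Set.range x)
    rw [dist_comm] at this
    unfold gd; linarith
  · have := Metric.infDist_le_infDist_add_dist (x := z) (y := w) (s := Set.range x)
    unfold gd; linarith

lemma gd_cont (x : Fin N → E) : Continuous (gd x) := Metric.continuous_infDist_pt _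

lemma iInf_eq_gd (hN : 1 ≤ N) {p : ℝ} (hp : 1 ≤ p) (x : Fin N → E) (z : E) :
    ⨅ i, (‖z - x i‖₊ : ℝ≥0∞) ^ p = ENNReal.ofReal (gd x z ^ p) := by
  have h0 : 0 ≤ p := by linarith
  have key : ∀ i, (‖z - x i‖₊ : ℝ≥0∞) ^ p = ENNReal.ofReal (‖z - x i‖ ^ p) := fun i => by
    rw [← ENNReal.ofReal_rpow_of_nonneg (norm_nonneg _) h0, ofReal_norm]; rfl
  apply le_antisymm
  · obtain ⟨i, hi⟩ := gd_attained hN x z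
    refine (iInf_le _ i).trans ?_
    rw [key, hi]
  · refine le_iInf fun i => ?_
    rw [key]
    exact ENNReal.ofReal_le_ofReal (Real.rpow_le_rpow (gd_nonneg _ _) (gd_le _ _ _) h0)

lemma gd_scale [NormedSpace ℝ E] (hN : 1 ≤ N) (x : Fin N → E) (a z : E) {t : ℝ} (ht : 0 < t) :
    gd (fun i => a + t • x i) z = t * gd x (t⁻¹ • (z - a)) := by
  have key : ∀ i, ‖z - (a + t • x i)‖ = t * ‖t⁻¹ • (z - a) - x i‖ := fun i => by
    have : z - (a + t • x i) = t • (t⁻¹ • (z - a) - x i) := by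
      rw [smul_sub, smul_smul, mul_inv_cancel₀ ht.ne', one_smul]; abel
    rw [this, norm_smul, Real.norm_of_nonneg ht.le]
  apply le_antisymm
  · obtain ⟨i, hi⟩ := gd_attained hN x (t⁻¹ • (z - a))
    rw [hi, ← key]
    exact gd_le (fun i => a + t • x i) z i
  · obtain ⟨i, hi⟩ := gd_attained hN (fun i => a + t • x i) z
    rw [hi, key]
    exact mul_le_mul_of_nonneg_left (gd_le _ _ _) ht.le

/-- The grids whose difference of error functions is a bump. -/
def Good (E : Type*) [NormedAddCommGroup E] (N : ℕ) : Prop :=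
  ∃ (x y : Fin N → E) (R : ℝ), (∀ z, gd y z ≤ gd x z) ∧ (∀ z, R ≤ ‖z‖ → gd y z = gd x z) ∧
    gd y 0 < gd x 0

lemma good_of_cover {k : ℕ} (hk : 1 ≤ k) (hkN : k + 1 ≤ N) (a : Fin k → E) (ha : ∀ i, a i ≠ 0)
    (R : ℝ) (hR : ∀ z, R ≤ ‖z‖ → ∃ i, ‖z - a i‖ ≤ ‖z‖) : Good E N := by
  obtain ⟨M, rfl⟩ : ∃ M, N = M + 1 := ⟨N - 1, by omega⟩
  let s : Fin M → Fin k := fun j => ⟨min j.1 (k - 1), by omega⟩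
  have hs : ∀ i, ∃ j, s j = i := fun i => ⟨⟨i.1, by omega⟩, by ext; simp [s]; omega⟩
  let b : Fin M → E := fun j => a (s j)
  have hb : ∀ j, b j ≠ 0 := fun j => ha _
  have hbR : ∀ z, R ≤ ‖z‖ → ∃ i, ‖z - b i‖ ≤ ‖z‖ := fun z hz => by
    obtain ⟨i, hi⟩ := hR z hz
    obtain ⟨j, rfl⟩ := hs i
    exact ⟨j, hi⟩
  have hM : 0 < M := by omega
  let x : Fin (M + 1) → E := Fin.cons (b ⟨0, hM⟩) b
  let y : Fin (M + 1) → E := Fin.cons 0 b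
  have hx0 : ∀ i, ∃ j, x i = b j := fun i => by
    refine Fin.cases ⟨⟨0, hM⟩, rfl⟩ (fun j => ⟨j, rfl⟩) i
  have hle : ∀ z, gd y z ≤ gd x z := fun z => by
    obtain ⟨i, hi⟩ := gd_attained (by omega) x z
    obtain ⟨j, hj⟩ := hx0 i
    rw [hi, hj]
    exact gd_le y z j.succ
  refine ⟨x, y, R, hle, fun z hz => le_antisymm (hle z) ?_, ?_⟩
  · obtain ⟨i, hi⟩ := gd_attained (by omega) y z
    rw [hi]
    refine Fin.cases ?_ (fun j => ?_) i
    · obtain ⟨j, hj⟩ := hbR z hz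
      have : y 0 = 0 := rfl
      rw [this, sub_zero]
      exact (gd_le x z j.succ).trans hj
    · exact gd_le x z j.succ
  · obtain ⟨i, hi⟩ := gd_attained (by omega) x 0
    obtain ⟨j, hj⟩ := hx0 i
    have h1 : gd y 0 ≤ 0 := by simpa [y] using gd_le y 0 0
    rw [hi, hj, zero_sub, norm_neg]
    exact h1.trans_lt (norm_pos_iff.2 (hb j))

lemma good_coverNum [NormedSpace ℝ E] [FiniteDimensional ℝ E] [Nontrivial E]
    (h : coverNum E + 1 ≤ N) : Good E N := by
  have hne : {k | ∃ a : Fin k → E, (∀ i, a i ∈ Metric.sphere (0 : E) 1) ∧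
    Metric.sphere (0 : E) 1 ⊆ ⋃ i, Metric.closedBall (a i) 1}.Nonempty := by
    have := FiniteDimensional.proper_real E
    obtain ⟨t, ht, htf, hc⟩ := (isCompact_sphere (0 : E) 1).finite_cover_balls one_pos
    obtain ⟨k, f, hf⟩ : ∃ k, ∃ f : Fin k → E, Set.range f = t := by
      have := htf.fintype
      refine ⟨Fintype.card t, fun i => ((Fintype.equivFin t).symm i : E), ?_⟩
      ext z
      constructor
      · rintro ⟨i, rfl⟩; exact Subtype.coe_prop _
      · intro hz; exact ⟨Fintype.equivFin t ⟨z, hz⟩, by simp⟩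
    refine ⟨k, f, fun i => ht (hf ▸ ⟨i, rfl⟩), hc.trans ?_⟩
    intro z hz
    simp only [Set.mem_iUnion] at hz ⊢
    obtain ⟨w, hw, hz⟩ := hz
    obtain ⟨i, rfl⟩ := hf ▸ hw
    exact ⟨i, Metric.ball_subset_closedBall hz⟩
  obtain ⟨a, ha, hc⟩ := Nat.sInf_mem hne
  change Fin (coverNum E) → E at a
  obtain ⟨u, hu⟩ := (NormedSpace.sphere_nonempty (x := (0 : E)) (r := 1)).2 zero_le_one
  have hu' := hc hu
  simp only [Set.mem_iUnion] at hu'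
  obtain ⟨i0, -⟩ := hu'
  refine good_of_cover (k := coverNum E) (Nat.one_le_iff_ne_zero.2 fun h0 => ?_) h a
    (fun i => ?_) 1 fun z hz => ?_
  · have : i0.1 < coverNum E := i0.2
    omega
  · intro h0
    have := ha i
    rw [mem_sphere_zero_iff_norm] at this
    have h0' : a i = 0 := h0
    rw [h0'] at this
    simp at this
  · have hz0 : ‖z‖ ≠ 0 := by linarith
    have h1 : ‖z‖⁻¹ • z ∈ Metric.sphere (0 : E) 1 := by
      rw [mem_sphere_zero_iff_norm, norm_smul, norm_inv, norm_norm, inv_mul_cancel₀ hz0]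
    have h2 := hc h1
    simp only [Set.mem_iUnion] at h2
    obtain ⟨i, hi⟩ := h2
    refine ⟨i, ?_⟩
    rw [Metric.mem_closedBall, dist_eq_norm] at hi
    have h3 : ‖z - ‖z‖⁻¹ • z‖ = ‖z‖ - 1 := by
      have : z - ‖z‖⁻¹ • z = (1 - ‖z‖⁻¹) • z := by rw [sub_smul, one_smul]
      rw [this, norm_smul, Real.norm_of_nonneg, sub_mul, one_mul, inv_mul_cancel₀ hz0]
      have := inv_le_one_of_one_le₀ hz
      linarith
    calc ‖z - a i‖ = ‖(z - ‖z‖⁻¹ • z) + (‖z‖⁻¹ • z - a i)‖ := by congr 1; abel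
      _ ≤ _ := norm_add_le _ _
      _ ≤ (‖z‖ - 1) + 1 := by rw [h3]; gcongr
      _ = ‖z‖ := by ring

lemma cover_inner (F : Type*) [NormedAddCommGroup F] [InnerProductSpace ℝ F]
    [FiniteDimensional ℝ F] [Nontrivial F] :
    ∃ a : Fin (Module.finrank ℝ F + 1) → F, (∀ i, a i ≠ 0) ∧
      ∃ R, ∀ z, R ≤ ‖z‖ → ∃ i, ‖z - a i‖ ≤ ‖z‖ := by
  set d := Module.finrank ℝ F with hd
  let e := stdOrthonormalBasis ℝ F
  have hd0 : 0 < d := Module.finrank_pos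
  let v : F := -∑ j, e j
  let a : Fin (d + 1) → F := Fin.cons v e
  have hcrit : ∀ z w : F, ‖w‖ ^ 2 ≤ 2 * inner ℝ z w → ‖z - w‖ ≤ ‖z‖ := fun z w h => by
    have := norm_sub_sq_real z w
    exact le_of_sq_le_sq (by linarith) (norm_nonneg _)
  have he1 : ∀ j, ‖e j‖ = 1 := fun j => e.orthonormal.1 j
  have hvin : ∀ z, inner ℝ z v = -∑ j, inner ℝ z (e j) := fun z => by
    simp [v, inner_neg_right, inner_sum]
  have hev : ∀ j, inner ℝ (e j) v = -1 := fun j => by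
    rw [hvin, Finset.sum_eq_single j]
    · rw [real_inner_self_eq_norm_sq, he1]; norm_num
    · intro i _ hij; exact e.orthonormal.2 (Ne.symm hij)
    · simp
  refine ⟨a, fun i => ?_, ?_⟩
  · refine Fin.cases ?_ (fun j => ?_) i
    · intro h0
      have h0' : v = 0 := h0
      have := hev ⟨0, hd0⟩
      rw [h0', inner_zero_right] at this
      norm_num at this
    · intro h0
      have h0' : e j = 0 := h0
      have := he1 j
      rw [h0', norm_zero] at this
      norm_num at this
  set C : ℝ := 1 + ‖v‖ ^ 2 with hC
  have hC0 : 0 < C := by positivity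
  refine ⟨d * (d * C) + 1, fun z hz => ?_⟩
  by_contra hcon
  push Not at hcon
  have h1 : ∀ j, inner ℝ z (e j) ≤ C := fun j => by
    by_contra hlt
    push Not at hlt
    refine (hcon j.succ).not_ge (hcrit z (e j) ?_)
    rw [he1]; nlinarith [sq_nonneg ‖v‖]
  have h2 : inner ℝ z v ≤ C := by
    by_contra hlt
    push Not at hlt
    refine (hcon 0).not_ge (hcrit z v ?_)
    nlinarith [sq_nonneg ‖v‖]
  rw [hvin] at h2
  have hd1 : (1 : ℝ) ≤ d := by exact_mod_cast hd0
  have h3 : ∀ j, |inner ℝ z (e j)| ≤ d * C := fun j => by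
    rw [abs_le]
    constructor
    · have h4 : ∑ i ∈ Finset.univ.erase j, inner ℝ z (e i) ≤ (d - 1) * C := by
        refine (Finset.sum_le_card_nsmul _ _ C (fun i _ => h1 i)).trans ?_
        rw [Finset.card_erase_of_mem (Finset.mem_univ _), nsmul_eq_mul, Finset.card_univ,
          Fintype.card_fin, Nat.cast_sub (by omega), Nat.cast_one]
      have h5 := Finset.add_sum_erase Finset.univ (fun i => inner ℝ z (e i)) (Finset.mem_univ j)
      nlinarith
    · have := h1 j
      nlinarith
  have h6 : ‖z‖ ≤ d * (d * C) := by
    conv_lhs => rw [← e.sum_repr' z]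
    refine (norm_sum_le _ _).trans ?_
    refine (Finset.sum_le_card_nsmul _ _ (d * C) (fun i _ => ?_)).trans ?_
    · rw [norm_smul, he1, mul_one, real_inner_comm]; exact h3 i
    · simp [hd]
  linarith

lemma good_inner [NormedSpace ℝ E] [FiniteDimensional ℝ E] [Nontrivial E]
    (h : Nonempty (InnerProductSpace ℝ E)) (hN : Module.finrank ℝ E + 2 ≤ N) : Good E N := by
  have hpar : ∀ x y : E, ‖x + y‖ * ‖x + y‖ + ‖x - y‖ * ‖x - y‖ = 2 * (‖x‖ * ‖x‖ + ‖y‖ * ‖y‖) := by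
    obtain ⟨I⟩ := h
    intro x y
    have := @parallelogram_law_with_norm ℝ E _ _ I x y
    nlinarith
  obtain ⟨a, ha, R, hR⟩ : ∃ a : Fin (Module.finrank ℝ E + 1) → E, (∀ i, a i ≠ 0) ∧
      ∃ R, ∀ z, R ≤ ‖z‖ → ∃ i, ‖z - a i‖ ≤ ‖z‖ := by
    let : InnerProductSpace ℝ E := InnerProductSpace.ofNorm ℝ hpar
    exact cover_inner E
  exact good_of_cover (by omega) (by omega) a ha R hR

end geom

section coupling
variable {E : Type*} [NormedAddCommGroup E] [MeasurableSpace E]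

/-- transport cost -/
noncomputable def Wc (p : ℝ) (μ ν : Measure E) : ℝ≥0∞ :=
  ⨅ π ∈ {π : Measure (E × E) | π.map Prod.fst = μ ∧ π.map Prod.snd = ν},
      ∫⁻ q, (‖q.1 - q.2‖₊ : ℝ≥0∞) ^ p ∂π

lemma wassersteinDist_eq (p : ℝ) (μ ν : Measure E) :
    wassersteinDist p μ ν = (Wc p μ ν).toReal ^ (1 / p) := rfl

/-- the moment -/
noncomputable def mom (p : ℝ) (μ : Measure E) : ℝ≥0∞ := ∫⁻ ξ, ‖ξ‖ₑ ^ p ∂μ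

lemma mom_ne_top {p : ℝ} {μ : Measure E} (h : HasFiniteMoment p μ) : mom p μ ≠ ∞ := h

variable [NormedSpace ℝ E] [FiniteDimensional ℝ E] [BorelSpace E]

lemma meas_enorm_rpow (p : ℝ) : Measurable fun ξ : E => ‖ξ‖ₑ ^ p := by fun_prop

lemma mom_sub {p : ℝ} {μ σ : Measure E} [IsFiniteMeasure σ] (h : σ ≤ μ)
    (hf : mom p μ ≠ ∞) : mom p (μ - σ) = mom p μ - mom p σ := by
  have h1 : mom p (μ - σ) + mom p σ = mom p μ := by
    unfold mom
    rw [← lintegral_add_measure, Measure.sub_add_cancel_of_le h]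
  rw [← h1, ENNReal.add_sub_cancel_right]
  intro h2
  rw [h2, add_top] at h1
  exact hf h1.symm

lemma Wc_le {p : ℝ} (hp : 1 ≤ p) {μ ν : Measure E} [IsProbabilityMeasure μ]
    [IsProbabilityMeasure ν] (hμ : mom p μ ≠ ∞) (hν : mom p ν ≠ ∞) (π0 : Measure (E × E))
    (h1 : π0.map Prod.fst ≤ μ) (h2 : π0.map Prod.snd ≤ ν) :
    Wc p μ ν ≤ ∫⁻ q, ‖q.1 - q.2‖ₑ ^ p ∂π0 + 2 ^ (p - 1) *
      ((mom p μ - ∫⁻ q, ‖q.1‖ₑ ^ p ∂π0) + (mom p ν - ∫⁻ q, ‖q.2‖ₑ ^ p ∂π0)) := by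
  have hmf : ∫⁻ q, ‖q.1‖ₑ ^ p ∂π0 = mom p (π0.map Prod.fst) := by
    rw [mom, lintegral_map (meas_enorm_rpow p) measurable_fst]
  have hms : ∫⁻ q, ‖q.2‖ₑ ^ p ∂π0 = mom p (π0.map Prod.snd) := by
    rw [mom, lintegral_map (meas_enorm_rpow p) measurable_snd]
  have hf1 : IsFiniteMeasure (π0.map Prod.fst) := isFiniteMeasure_of_le μ h1
  have hf2 : IsFiniteMeasure (π0.map Prod.snd) := isFiniteMeasure_of_le ν h2
  rw [hmf, hms, ← mom_sub h1 hμ, ← mom_sub h2 hν]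
  set α := μ - π0.map Prod.fst with hα
  set β := ν - π0.map Prod.snd with hβ
  have ha : α + π0.map Prod.fst = μ := Measure.sub_add_cancel_of_le h1
  have hb : β + π0.map Prod.snd = ν := Measure.sub_add_cancel_of_le h2
  have hfa : IsFiniteMeasure α := isFiniteMeasure_of_le μ (ha ▸ Measure.le_add_right le_rfl)
  have hfb : IsFiniteMeasure β := isFiniteMeasure_of_le ν (hb ▸ Measure.le_add_right le_rfl)
  have hfst : π0.map Prod.fst Set.univ = π0 Set.univ := by
    rw [Measure.map_apply measurable_fst MeasurableSet.univ, Set.preimage_univ]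
  have hsnd : π0.map Prod.snd Set.univ = π0 Set.univ := by
    rw [Measure.map_apply measurable_snd MeasurableSet.univ, Set.preimage_univ]
  have hab : α Set.univ = β Set.univ := by
    have e1 : α Set.univ + π0 Set.univ = 1 := by
      rw [← hfst, ← Measure.add_apply, ha]; simp
    have e2 : β Set.univ + π0 Set.univ = 1 := by
      rw [← hsnd, ← Measure.add_apply, hb]; simp
    have hfin : π0 Set.univ ≠ ∞ := hfst ▸ measure_ne_top _ _
    exact (ENNReal.add_left_inj hfin).1 (e1.trans e2.symm)
  have hθ : α Set.univ ≠ ∞ := measure_ne_top _ _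
  have hαs : ((α Set.univ)⁻¹ * α Set.univ) • α = α := by
    by_cases h0 : α Set.univ = 0
    · rw [Measure.measure_univ_eq_zero] at h0
      rw [h0, smul_zero]
    · rw [ENNReal.inv_mul_cancel h0 hθ, one_smul]
  have hβs : ((α Set.univ)⁻¹ * α Set.univ) • β = β := by
    by_cases h0 : β Set.univ = 0
    · rw [Measure.measure_univ_eq_zero] at h0
      rw [h0, smul_zero]
    · rw [ENNReal.inv_mul_cancel (hab ▸ h0) hθ, one_smul]
  let π : Measure (E × E) := π0 + (α Set.univ)⁻¹ • α.prod β
  have hπ : π ∈ {π : Measure (E × E) | π.map Prod.fst = μ ∧ π.map Prod.snd = ν} := by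
    constructor
    · rw [Measure.map_add _ _ measurable_fst, Measure.map_smul, Measure.map_fst_prod, ← hab,
        smul_smul, hαs, add_comm, ha]
    · rw [Measure.map_add _ _ measurable_snd, Measure.map_smul, Measure.map_snd_prod,
        smul_smul, hβs, add_comm, hb]
  refine (iInf₂_le π hπ).trans ?_
  change ∫⁻ q, ‖q.1 - q.2‖ₑ ^ p ∂(π0 + (α Set.univ)⁻¹ • α.prod β) ≤ _
  rw [lintegral_add_measure, lintegral_smul_measure]
  gcongr
  have hpt : ∀ q : E × E, ‖q.1 - q.2‖ₑ ^ p ≤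
      2 ^ (p - 1) * (‖q.1‖ₑ ^ p * 1 + 1 * ‖q.2‖ₑ ^ p) := fun q => by
    rw [mul_one, one_mul]
    calc ‖q.1 - q.2‖ₑ ^ p ≤ (‖q.1‖ₑ + ‖q.2‖ₑ) ^ p :=
          ENNReal.rpow_le_rpow (enorm_sub_le) (by linarith)
      _ ≤ _ := ENNReal.rpow_add_le_mul_rpow_add_rpow _ _ hp
  have hmA : Measurable fun q : E × E => ‖q.1‖ₑ ^ p * 1 := by fun_prop
  have hmB : Measurable fun q : E × E => ‖q.1‖ₑ ^ p * 1 + 1 * ‖q.2‖ₑ ^ p := by fun_prop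
  calc (α Set.univ)⁻¹ • ∫⁻ q, ‖q.1 - q.2‖ₑ ^ p ∂(α.prod β)
      ≤ (α Set.univ)⁻¹ • ∫⁻ q, 2 ^ (p - 1) * (‖q.1‖ₑ ^ p * 1 + 1 * ‖q.2‖ₑ ^ p) ∂(α.prod β) := by
        gcongr with q
        exact hpt q
    _ = (α Set.univ)⁻¹ * (2 ^ (p - 1) * (mom p α * β Set.univ + α Set.univ * mom p β)) := by
        rw [lintegral_const_mul _ hmB, lintegral_add_left hmA,
          lintegral_prod_mul (f := fun x => ‖x‖ₑ ^ p) (g := fun _ => 1)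
            (meas_enorm_rpow p).aemeasurable aemeasurable_const,
          lintegral_prod_mul (f := fun _ => 1) (g := fun x => ‖x‖ₑ ^ p)
             aemeasurable_const (meas_enorm_rpow p).aemeasurable]
        simp [mom]
    _ = ((α Set.univ)⁻¹ * α Set.univ) * (2 ^ (p - 1) * (mom p α + mom p β)) := by
        rw [← hab]; ring
    _ ≤ 1 * (2 ^ (p - 1) * (mom p α + mom p β)) := by
        gcongr
        exact ENNReal.inv_mul_le_one _
    _ = _ := one_mul _

lemma Wc_ne_top {p : ℝ} (hp : 1 ≤ p) {μ ν : Measure E} [IsProbabilityMeasure μ]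
    [IsProbabilityMeasure ν] (hμ : mom p μ ≠ ∞) (hν : mom p ν ≠ ∞) : Wc p μ ν ≠ ∞ := by
  refine ne_top_of_le_ne_top ?_ (Wc_le hp hμ hν 0 (by simpa using Measure.zero_le _)
    (by simpa using Measure.zero_le _))
  simp only [lintegral_zero_measure, tsub_zero, zero_add]
  exact ENNReal.mul_ne_top (ENNReal.rpow_ne_top_of_nonneg (by linarith) (by simp))
    (ENNReal.add_ne_top.2 ⟨hμ, hν⟩)

lemma quantErr_eq {N : ℕ} (hN : 1 ≤ N) {p : ℝ} (hp : 1 ≤ p) (μ : Measure E) (x : Fin N → E) :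
    quantErr p N μ x = (eLpNorm (gd x) (ENNReal.ofReal p) μ).toReal := by
  have h0 : 0 ≤ p := by linarith
  rw [eLpNorm_eq_lintegral_rpow_enorm_toReal (by simp; linarith) (by simp),
    ENNReal.toReal_ofReal h0, ← ENNReal.toReal_rpow, quantErr]
  congr 3
  ext z
  rw [iInf_eq_gd hN hp, Real.enorm_eq_ofReal (gd_nonneg _ _),
    ENNReal.ofReal_rpow_of_nonneg (gd_nonneg _ _) h0]

lemma gd_memLp {N : ℕ} (hN : 1 ≤ N) {p : ℝ} (hp : 1 ≤ p) {μ : Measure E} [IsProbabilityMeasure μ]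
    (hμ : mom p μ ≠ ∞) (x : Fin N → E) : MemLp (gd x) (ENNReal.ofReal p) μ := by
  have h0 : 0 ≤ p := by linarith
  have h1 : MemLp (fun z : E => z) (ENNReal.ofReal p) μ := by
    refine ⟨measurable_id.aestronglyMeasurable, ?_⟩
    rw [eLpNorm_eq_lintegral_rpow_enorm_toReal (by simp; linarith) (by simp),
      ENNReal.toReal_ofReal h0]
    exact ENNReal.rpow_lt_top_of_nonneg (by positivity) hμ
  have h2 := h1.sub (memLp_const (x ⟨0, hN⟩))
  refine h2.mono (gd_cont x).aestronglyMeasurable (ae_of_all _ fun z => ?_)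
  rw [Real.norm_of_nonneg (gd_nonneg _ _)]
  exact gd_le x z _

lemma eLpNorm_gd_le {N : ℕ} {p : ℝ} (hp : 1 ≤ p) {π : Measure (E × E)}
    (x : Fin N → E) {f g : E × E → E} (hf : Measurable f) (hg : Measurable g) 
    (hfg : ∀ q, ‖f q - g q‖ₑ = ‖q.1 - q.2‖ₑ) :
    eLpNorm (gd x) (ENNReal.ofReal p) (π.map f) ≤ eLpNorm (gd x) (ENNReal.ofReal p) (π.map g)
      + (∫⁻ q, ‖q.1 - q.2‖ₑ ^ p ∂π) ^ (1 / p) := by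
  have h0 : 0 ≤ p := by linarith
  have hm := (gd_cont x).measurable
  have hsub : Measurable fun q : E × E => q.1 - q.2 := by fun_prop
  have e : (∫⁻ q, ‖q.1 - q.2‖ₑ ^ p ∂π) ^ (1 / p) =
      eLpNorm (fun q : E × E => q.1 - q.2) (ENNReal.ofReal p) π := by
    rw [eLpNorm_eq_lintegral_rpow_enorm_toReal (by simp; linarith) (by simp),
      ENNReal.toReal_ofReal h0]
  rw [e, eLpNorm_map_measure hm.aestronglyMeasurable hf.aemeasurable,
    eLpNorm_map_measure hm.aestronglyMeasurable hg.aemeasurable]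
  have : gd x ∘ f = gd x ∘ g + fun q => gd x (f q) - gd x (g q) := by
    ext q; simp
  rw [this]
  refine (eLpNorm_add_le (hm.comp hg).aestronglyMeasurable
    ((hm.comp hf).sub (hm.comp hg)).aestronglyMeasurable (by simpa using hp)).trans ?_
  gcongr
  refine eLpNorm_mono_enorm fun q => ?_
  rw [← hfg, enorm_le_iff_norm_le, Real.norm_eq_abs]
  exact gd_lip x _ _

lemma quantErr_sub_le {N : ℕ} (hN : 1 ≤ N) {p : ℝ} (hp : 1 ≤ p) {μ ν : Measure E}
    [IsProbabilityMeasure μ] [IsProbabilityMeasure ν] (hμ : mom p μ ≠ ∞) (hν : mom p ν ≠ ∞)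
    (x : Fin N → E) : |quantErr p N μ x - quantErr p N ν x| ≤ wassersteinDist p μ ν := by
  have h0 : 0 < p := by linarith
  have hW : Wc p μ ν ^ (1 / p) ≠ ∞ :=
    ENNReal.rpow_ne_top_of_nonneg (by positivity) (Wc_ne_top hp hμ hν)
  have hrp : ∀ c : ℝ≥0∞, (∀ π : Measure (E × E), π.map Prod.fst = μ → π.map Prod.snd = ν →
      c ≤ (∫⁻ q, ‖q.1 - q.2‖ₑ ^ p ∂π) ^ (1 / p)) → c ≤ Wc p μ ν ^ (1 / p) := fun c hc => by
    rw [one_div, ENNReal.le_rpow_inv_iff h0]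
    refine le_iInf₂ fun π hπ => ?_
    have := hc π hπ.1 hπ.2
    rwa [one_div, ENNReal.le_rpow_inv_iff h0] at this
  have fa := (gd_memLp hN hp hμ x).2.ne
  have fb := (gd_memLp hN hp hν x).2.ne
  set a := eLpNorm (gd x) (ENNReal.ofReal p) μ with ha
  set b := eLpNorm (gd x) (ENNReal.ofReal p) ν with hb
  have h1 : a - b ≤ Wc p μ ν ^ (1 / p) := hrp _ fun π h1 h2 => by
    rw [tsub_le_iff_left, ha, hb, ← h1, ← h2]
    exact eLpNorm_gd_le hp x measurable_fst measurable_snd fun q => rfl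
  have h2 : b - a ≤ Wc p μ ν ^ (1 / p) := hrp _ fun π h1 h2 => by
    rw [tsub_le_iff_left, ha, hb, ← h1, ← h2]
    exact eLpNorm_gd_le hp x measurable_snd measurable_fst fun q => enorm_sub_rev _ _
  rw [quantErr_eq hN hp, quantErr_eq hN hp, wassersteinDist_eq, ENNReal.toReal_rpow, abs_le, ← ha,
    ← hb]
  rw [tsub_le_iff_left] at h1 h2
  have h1' := ENNReal.toReal_mono (ENNReal.add_ne_top.2 ⟨fb, hW⟩) h1
  have h2' := ENNReal.toReal_mono (ENNReal.add_ne_top.2 ⟨fa, hW⟩) h2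
  rw [ENNReal.toReal_add fb hW] at h1'
  rw [ENNReal.toReal_add fa hW] at h2'
  constructor <;> linarith

end coupling

section vague
variable {E : Type*} [NormedAddCommGroup E] [NormedSpace ℝ E] [FiniteDimensional ℝ E]
  [MeasurableSpace E] [BorelSpace E]

lemma vague_approx {μ : ℕ → Measure E} {μ' : Measure E}
    [∀ n, IsProbabilityMeasure (μ n)] [IsProbabilityMeasure μ']
    {φ : E → ℝ} (hφ : Continuous φ) (hφ0 : ∀ z, 0 ≤ φ z) {δ : ℝ} (hδ : ∀ z, δ ≤ ‖z‖ → φ z = 0)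
    (hφ1 : ∫ z, φ z ∂(Measure.addHaar : Measure E) = 1)
    (hconv : ∀ a, Tendsto (fun n => ∫ z, φ (z - a) ∂(μ n)) atTop (𝓝 (∫ z, φ (z - a) ∂μ')))
    {g : E → ℝ} (hg : Continuous g) (hgc : HasCompactSupport g) {ε : ℝ} (hε : 0 < ε)
    (hgε : ∀ z w, ‖z - w‖ < δ → |g z - g w| ≤ ε) :
    ∀ᶠ n in atTop, |∫ z, g z ∂(μ n) - ∫ z, g z ∂μ'| ≤ 3 * ε := by
  let V : Measure E := Measure.addHaar
  obtain ⟨r, hr⟩ : ∃ r, ∀ a, r ≤ ‖a‖ → g a = 0 := by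
    obtain ⟨r, hr⟩ := hgc.isCompact.isBounded.exists_norm_le
    refine ⟨r + 1, fun a ha => image_eq_zero_of_notMem_tsupport fun h => ?_⟩
    have := hr a h
    linarith
  have hφc : HasCompactSupport φ := HasCompactSupport.intro (isCompact_closedBall (0 : E) δ)
    fun z hz => hδ z (by simpa using (not_le.1 (by simpa using hz)).le)
  have hφi : Integrable φ V := hφ.integrable_of_hasCompactSupport hφc
  have hgi : Integrable g V := hg.integrable_of_hasCompactSupport hgc
  obtain ⟨C, hC⟩ := hφ.bounded_above_of_compact_support hφc
  let f : E → E → ℝ := fun z a => g a * φ (z - a)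
  have hfc : Continuous (Function.uncurry f) := by
    simp only [f, Function.uncurry_def]; fun_prop
  have hfs : HasCompactSupport (Function.uncurry f) := by
    refine HasCompactSupport.intro
      ((isCompact_closedBall (0 : E) (r + δ)).prod (isCompact_closedBall (0 : E) r)) ?_
    rintro ⟨z, a⟩ hza
    simp only [Function.uncurry, f]
    by_contra hne
    have h1 : ‖a‖ < r := by
      by_contra h; exact hne (by rw [hr a (not_lt.1 h), zero_mul])
    have h2 : ‖z - a‖ < δ := by
      by_contra h; exact hne (by rw [hδ _ (not_lt.1 h), mul_zero])
    apply hza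
    have h3 : ‖z‖ ≤ ‖z - a‖ + ‖a‖ := by simpa using norm_add_le (z - a) a
    simp only [Set.mem_prod, mem_closedBall_zero_iff]
    constructor <;> linarith
  let G : E → ℝ := fun z => ∫ a, f z a ∂V
  have hφz : ∀ z, Integrable (fun a => φ (z - a)) V := fun z => hφi.comp_sub_left z
  have hφz1 : ∀ z, ∫ a, φ (z - a) ∂V = 1 := fun z => by
    rw [integral_sub_left_eq_self φ V z]; exact hφ1
  have hfz : ∀ z, Integrable (f z) V := fun z => by
    refine (hgi.norm.mul_const C).mono' ?_ (ae_of_all _ fun a => ?_)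
    · exact (hg.mul (hφ.comp (continuous_const.sub continuous_id))).aestronglyMeasurable
    · rw [norm_mul]
      exact mul_le_mul_of_nonneg_left (hC _) (norm_nonneg _)
  have hGg : ∀ z, |G z - g z| ≤ ε := fun z => by
    have e1 : G z - g z = ∫ a, (g a - g z) * φ (z - a) ∂V := by
      simp only [sub_mul]
      rw [integral_sub (hfz z) ((hφz z).const_mul _), integral_const_mul, hφz1, mul_one]
    rw [e1, ← Real.norm_eq_abs]
    refine (norm_integral_le_of_norm_le ((hφz z).const_mul ε) (ae_of_all _ fun a => ?_)).trans ?_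
    · rw [norm_mul, Real.norm_of_nonneg (hφ0 _), Real.norm_eq_abs]
      by_cases h : ‖z - a‖ < δ
      · refine mul_le_mul_of_nonneg_right (hgε _ _ ?_) (hφ0 _)
        rwa [norm_sub_rev]
      · rw [hδ _ (not_lt.1 h)]; simp
    · rw [integral_const_mul, hφz1, mul_one]
  have hIntG : ∀ ρ : Measure E, IsProbabilityMeasure ρ → Integrable G ρ ∧
      ∫ z, G z ∂ρ = ∫ a, g a * ∫ z, φ (z - a) ∂ρ ∂V := fun ρ hρ => by
    have hI : Integrable (Function.uncurry f) (ρ.prod V) :=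
      hfc.integrable_of_hasCompactSupport hfs
    refine ⟨hI.integral_prod_left, ?_⟩
    simp only [G]
    rw [integral_integral_swap hI]
    simp only [f, integral_const_mul]
  have hclose : ∀ ρ : Measure E, IsProbabilityMeasure ρ → |∫ z, G z ∂ρ - ∫ z, g z ∂ρ| ≤ ε :=
    fun ρ hρ => by
    rw [← integral_sub (hIntG ρ hρ).1 (hg.integrable_of_hasCompactSupport hgc), ← Real.norm_eq_abs]
    refine (norm_integral_le_of_norm_le_const (ae_of_all _ hGg)).trans ?_
    simp
  have hlim : Tendsto (fun n => ∫ z, G z ∂(μ n)) atTop (𝓝 (∫ z, G z ∂μ')) := by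
    simp only [fun n => (hIntG (μ n) inferInstance).2, (hIntG μ' inferInstance).2]
    refine tendsto_integral_of_dominated_convergence (fun a => ‖g a‖ * C) (fun n => ?_)
      (hgi.norm.mul_const C) (fun n => ae_of_all _ fun a => ?_)
      (ae_of_all _ fun a => (hconv a).const_mul _)
    · refine hg.aestronglyMeasurable.mul ?_
      have hm : StronglyMeasurable (Function.uncurry fun a z : E => φ (z - a)) := by
        apply Continuous.stronglyMeasurable
        simp only [Function.uncurry_def]; fun_prop
      exact hm.integral_prod_right.aestronglyMeasurable
    · rw [norm_mul]
      refine mul_le_mul_of_nonneg_left ?_ (norm_nonneg _)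
      refine (norm_integral_le_of_norm_le_const (ae_of_all _ fun z => hC _)).trans ?_
      simp
  filter_upwards [Metric.tendsto_atTop'.1 hlim ε hε |> fun ⟨N, hN⟩ => eventually_gt_atTop N |>.mono
    (fun n hn => hN n hn)] with n hn
  rw [Real.dist_eq] at hn
  have h1 := hclose (μ n) inferInstance
  have h2 := hclose μ' inferInstance
  rw [abs_le] at h1 h2 ⊢
  rw [abs_lt] at hn
  constructor <;> linarith

lemma vague_of_bump {μ : ℕ → Measure E} {μ' : Measure E}
    [∀ n, IsProbabilityMeasure (μ n)] [IsProbabilityMeasure μ']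
    {ψ : E → ℝ} (hψ : Continuous ψ) (hψ0 : ∀ z, 0 ≤ ψ z) {R : ℝ} (hR : ∀ z, R ≤ ‖z‖ → ψ z = 0)
    (hψ1 : ψ 0 ≠ 0)
    (hconv : ∀ t : ℝ, 0 < t → ∀ a, Tendsto (fun n => ∫ z, ψ (t⁻¹ • (z - a)) ∂(μ n)) atTop
      (𝓝 (∫ z, ψ (t⁻¹ • (z - a)) ∂μ')))
    {g : E → ℝ} (hg : Continuous g) (hgc : HasCompactSupport g) :
    Tendsto (fun n => ∫ z, g z ∂(μ n)) atTop (𝓝 (∫ z, g z ∂μ')) := by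
  rw [Metric.tendsto_nhds]
  intro ε hε
  obtain ⟨δ, hδ, hgδ⟩ := Metric.uniformContinuous_iff.1 (hgc.uniformContinuous_of_continuous hg)
    (ε / 4) (by linarith)
  let t : ℝ := δ / (|R| + 1)
  have ht : 0 < t := by positivity
  have htR : ∀ z : E, δ ≤ ‖z‖ → R ≤ ‖t⁻¹ • z‖ := fun z hz => by
    rw [norm_smul, norm_inv, Real.norm_of_nonneg ht.le]
    have h1 : t * (|R| + 1) = δ := by simp only [t]; field_simp
    have h2 : |R| + 1 ≤ t⁻¹ * ‖z‖ := by
      rw [le_inv_mul_iff₀ ht, h1]; exact hz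
    have := le_abs_self R
    linarith
  have hψt : Continuous fun z => ψ (t⁻¹ • z) := by fun_prop
  set c := ∫ z, ψ (t⁻¹ • z) ∂(Measure.addHaar : Measure E) with hc
  have hc0 : 0 < c := by
    refine hψt.integral_pos_of_hasCompactSupport_nonneg_nonzero (x := 0)
      (HasCompactSupport.intro (isCompact_closedBall (0 : E) δ) fun z hz => hR _ (htR _ ?_))
      (fun z => hψ0 _) (by simpa using hψ1)
    have : δ < ‖z‖ := by simpa using hz
    exact this.le
  have := vague_approx (μ := μ) (μ' := μ') (φ := fun z => c⁻¹ * ψ (t⁻¹ • z)) (by fun_prop)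
    (fun z => mul_nonneg (by positivity) (hψ0 _)) (δ := δ)
    (fun z hz => by rw [hR _ (htR z hz), mul_zero])
    (by rw [integral_const_mul, ← hc, inv_mul_cancel₀ hc0.ne'])
    (fun a => by simpa only [integral_const_mul] using (hconv t ht a).const_mul c⁻¹)
    hg hgc (ε := ε / 4) (by linarith)
    (fun z w h => by
      have := hgδ (a := z) (b := w) (by rwa [dist_eq_norm])
      rw [Real.dist_eq] at this
      exact this.le)
  filter_upwards [this] with n hn
  rw [Real.dist_eq]
  linarith

lemma integral_gd_rpow {N : ℕ} (hN : 1 ≤ N) {p : ℝ} (hp : 1 ≤ p) (μ : Measure E)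
    (x : Fin N → E) : quantErr p N μ x ^ p = ∫ z, gd x z ^ p ∂μ := by
  rw [integral_eq_lintegral_of_nonneg_ae
    (ae_of_all _ fun z => Real.rpow_nonneg (gd_nonneg _ _) _)
    ((gd_cont x).rpow_const fun _ => Or.inr (by linarith)).aestronglyMeasurable]
  rw [quantErr, ← Real.rpow_mul ENNReal.toReal_nonneg, one_div, inv_mul_cancel₀ (by linarith),
    Real.rpow_one]
  simp only [iInf_eq_gd hN hp]

lemma integrable_gd_rpow {N : ℕ} (hN : 1 ≤ N) {p : ℝ} (hp : 1 ≤ p) {μ : Measure E}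
    [IsProbabilityMeasure μ] (hμ : mom p μ ≠ ∞) (x : Fin N → E) :
    Integrable (fun z => gd x z ^ p) μ := by
  have := (gd_memLp hN hp hμ x).integrable_norm_rpow (by simp; linarith) (by simp)
  rw [ENNReal.toReal_ofReal (by linarith)] at this
  simpa only [Real.norm_of_nonneg (gd_nonneg _ _)] using this

lemma vague_of_quantErr {N : ℕ} (hN : 1 ≤ N) {p : ℝ} (hp : 1 ≤ p)
    {μ : ℕ → Measure E} {μ' : Measure E}
    [∀ n, IsProbabilityMeasure (μ n)] [IsProbabilityMeasure μ']
    (hμ : ∀ n, mom p (μ n) ≠ ∞) (hμ' : mom p μ' ≠ ∞) (hgood : Good E N)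
    (hconv : ∀ x : Fin N → E,
          Tendsto (fun n => quantErr p N (μ n) x) atTop (𝓝 (quantErr p N μ' x)))
    {g : E → ℝ} (hg : Continuous g) (hgc : HasCompactSupport g) :
    Tendsto (fun n => ∫ z, g z ∂(μ n)) atTop (𝓝 (∫ z, g z ∂μ')) := by
  have hp0 : 0 < p := by linarith
  obtain ⟨x, y, R, hle, heq, hlt⟩ := hgood
  have hI : ∀ x : Fin N → E, Tendsto (fun n => ∫ z, gd x z ^ p ∂(μ n)) atTop
      (𝓝 (∫ z, gd x z ^ p ∂μ')) := fun x => by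
    simp only [← integral_gd_rpow hN hp]
    exact (hconv x).rpow_const (Or.inr hp0.le)
  refine vague_of_bump (ψ := fun z => gd x z ^ p - gd y z ^ p) (R := R)
    (((gd_cont x).rpow_const fun _ => Or.inr hp0.le).sub
      ((gd_cont y).rpow_const fun _ => Or.inr hp0.le))
    (fun z => sub_nonneg.2 (Real.rpow_le_rpow (gd_nonneg _ _) (hle z) hp0.le))
    (fun z hz => by simp only [heq z hz, sub_self])
    (sub_pos.2 (Real.rpow_lt_rpow (gd_nonneg _ _) hlt hp0)).ne' (fun t ht a => ?_) hg hgc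
  have key : ∀ ρ : Measure E, IsProbabilityMeasure ρ → mom p ρ ≠ ∞ →
      ∫ z, (gd x (t⁻¹ • (z - a)) ^ p - gd y (t⁻¹ • (z - a)) ^ p) ∂ρ =
      (t ^ p)⁻¹ * (∫ z, gd (fun i => a + t • x i) z ^ p ∂ρ
        - ∫ z, gd (fun i => a + t • y i) z ^ p ∂ρ) := fun ρ hρ hm => by
    rw [← integral_sub (integrable_gd_rpow hN hp hm _) (integrable_gd_rpow hN hp hm _),
      ← integral_const_mul]
    congr 1
    ext z
    rw [gd_scale hN _ _ _ ht, gd_scale hN _ _ _ ht, Real.mul_rpow ht.le (gd_nonneg _ _),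
      Real.mul_rpow ht.le (gd_nonneg _ _)]
    have : t ^ p ≠ 0 := (Real.rpow_pos_of_pos ht p).ne'
    field_simp
  simp only [fun n => key (μ n) inferInstance (hμ n), key μ' inferInstance hμ']
  exact ((hI _).sub (hI _)).const_mul _

lemma mom_of_quantErr {N : ℕ} (hN : 1 ≤ N) {p : ℝ} (hp : 1 ≤ p)
    {μ : ℕ → Measure E} {μ' : Measure E}
    (hμ : ∀ n, mom p (μ n) ≠ ∞) (hμ' : mom p μ' ≠ ∞)
    (hconv : ∀ x : Fin N → E,
          Tendsto (fun n => quantErr p N (μ n) x) atTop (𝓝 (quantErr p N μ' x))) :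
    Tendsto (fun n => mom p (μ n)) atTop (𝓝 (mom p μ')) := by
  have hp0 : 0 < p := by linarith
  have : Nonempty (Fin N) := ⟨⟨0, hN⟩⟩
  have h1 : ∀ ρ : Measure E, quantErr p N ρ (fun _ => 0) ^ p = (mom p ρ).toReal := fun ρ => by
    rw [quantErr, ← Real.rpow_mul ENNReal.toReal_nonneg, one_div, inv_mul_cancel₀ (by linarith),
      Real.rpow_one]
    simp only [sub_zero, ciInf_const]
    rfl
  have h2 := (hconv fun _ => 0).rpow_const (p := p) (Or.inr hp0.le)
  simp only [h1] at h2
  exact (ENNReal.tendsto_toReal_iff hμ hμ').1 h2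

end vague


lemma exists_partition {E : Type*} [NormedAddCommGroup E] [ProperSpace E] {K : Set E} (hK : IsCompact K) {δ : ℝ} (hδ : 0 < δ) :
    ∃ (s : Finset E) (f : E → E → ℝ), (∀ a, Continuous (f a)) ∧ (∀ a, HasCompactSupport (f a)) ∧
      (∀ a z, 0 ≤ f a z) ∧ (∀ z, ∑ a ∈ s, f a z ≤ 1) ∧ (∀ z ∈ K, ∑ a ∈ s, f a z = 1) ∧
      (∀ a z w, f a z ≠ 0 → f a w ≠ 0 → ‖z - w‖ ≤ 2 * δ) := by
  obtain ⟨t, -, htf, hc⟩ := hK.finite_cover_balls (half_pos hδ)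
  let s := htf.toFinset
  let b : E → E → ℝ := fun a z => max 0 (δ - ‖z - a‖)
  let S : E → ℝ := fun z => max (δ / 2) (∑ a ∈ s, b a z)
  have hb0 : ∀ a z, 0 ≤ b a z := fun a z => le_max_left _ _
  have hbc : ∀ a, Continuous (b a) := fun a => by simp only [b]; fun_prop
  have hSc : Continuous S := by simp only [S]; fun_prop
  have hS0 : ∀ z, 0 < S z := fun z => lt_max_of_lt_left (half_pos hδ)
  have hbz : ∀ a z, δ ≤ ‖z - a‖ → b a z = 0 := fun a z h => max_eq_left (by linarith)
  have hsum : ∀ z, ∑ a ∈ s, b a z / S z = (∑ a ∈ s, b a z) / S z := fun z => by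
    rw [Finset.sum_div]
  refine ⟨s, fun a z => b a z / S z, fun a => (hbc a).div hSc fun z => (hS0 z).ne', fun a => ?_,
    fun a z => div_nonneg (hb0 _ _) (hS0 z).le, fun z => ?_, fun z hz => ?_, fun a z w hz hw => ?_⟩
  · refine HasCompactSupport.intro (isCompact_closedBall a δ) fun z hz => ?_
    change b a z / S z = 0
    rw [hbz a z, zero_div]
    rw [Metric.mem_closedBall, dist_eq_norm] at hz
    linarith
  · rw [hsum, div_le_one (hS0 z)]; exact le_max_right _ _
  · rw [hsum]
    have h1 := hc hz
    simp only [Set.mem_iUnion] at h1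
    obtain ⟨a, ha, hza⟩ := h1
    rw [Metric.mem_ball, dist_eq_norm] at hza
    have h2 : b a z ≤ ∑ a ∈ s, b a z :=
      Finset.single_le_sum (f := fun a => b a z) (fun a _ => hb0 a z) (htf.mem_toFinset.2 ha)
    have h3 : δ - ‖z - a‖ ≤ b a z := le_max_right _ _
    have h4 : S z = ∑ a ∈ s, b a z := max_eq_right (by linarith)
    rw [h4, div_self]
    rw [← h4]; exact (hS0 z).ne'
  · have h1 : ‖z - a‖ < δ := by
      by_contra h
      exact hz (by simp only [hbz a z (not_lt.1 h), zero_div])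
    have h2 : ‖w - a‖ < δ := by
      by_contra h
      exact hw (by simp only [hbz a w (not_lt.1 h), zero_div])
    have h3 : ‖z - w‖ ≤ ‖z - a‖ + ‖a - w‖ := norm_sub_le_norm_sub_add_norm_sub _ _ _
    rw [norm_sub_rev a w] at h3
    linarith

section final
variable {E : Type*} [NormedAddCommGroup E] [NormedSpace ℝ E] [FiniteDimensional ℝ E]
  [MeasurableSpace E] [BorelSpace E]

/-- mass of a partition function -/
noncomputable def mass (F : E → E → ℝ≥0∞) (a : E) (μ : Measure E) : ℝ≥0∞ := ∫⁻ z, F a z ∂μ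

lemma sum_smul_withDensity_le (s : Finset E) (F : E → E → ℝ≥0∞) (hF : ∀ a, Measurable (F a))
    (hF1 : ∀ z, ∑ a ∈ s, F a z ≤ 1) (c : E → ℝ≥0∞) (hc : ∀ a, c a ≤ 1) (μ : Measure E) :
    ∑ a ∈ s, c a • μ.withDensity (F a) ≤ μ := by
  rw [Measure.le_iff]
  intro A hA
  rw [Measure.finsetSum_apply]
  simp only [Measure.smul_apply, smul_eq_mul, withDensity_apply _ hA]
  calc ∑ a ∈ s, c a * ∫⁻ z in A, F a z ∂μ ≤ ∑ a ∈ s, ∫⁻ z in A, F a z ∂μ :=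
        Finset.sum_le_sum fun a _ => mul_le_of_le_one_left' (hc a)
    _ = ∫⁻ z in A, ∑ a ∈ s, F a z ∂μ := (lintegral_finsetSum _ fun a _ => hF a).symm
    _ ≤ ∫⁻ z in A, 1 ∂μ := lintegral_mono fun z => hF1 z
    _ = μ A := by simp

lemma exists_subcoupling {p : ℝ} (hp : 1 ≤ p) (μ ν : Measure E) [IsProbabilityMeasure μ]
    [IsProbabilityMeasure ν] (s : Finset E) (F : E → E → ℝ≥0∞) (hF : ∀ a, Measurable (F a))
    (hF1 : ∀ z, ∑ a ∈ s, F a z ≤ 1) (hFt : ∀ a z, F a z ≠ ∞) {D : ℝ≥0∞}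
    (hD : ∀ a z w, F a z ≠ 0 → F a w ≠ 0 → ‖z - w‖ₑ ≤ D) :
    ∃ π0 : Measure (E × E), π0.map Prod.fst ≤ μ ∧ π0.map Prod.snd ≤ ν ∧
      ∫⁻ q, ‖q.1 - q.2‖ₑ ^ p ∂π0 ≤ D ^ p ∧
      ∫⁻ q, ‖q.1‖ₑ ^ p ∂π0 = ∑ a ∈ s, ((max (mass F a μ) (mass F a ν))⁻¹ * mass F a ν) *
        ∫⁻ z, F a z * ‖z‖ₑ ^ p ∂μ ∧
      ∫⁻ q, ‖q.2‖ₑ ^ p ∂π0 = ∑ a ∈ s, ((max (mass F a μ) (mass F a ν))⁻¹ * mass F a μ) *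
        ∫⁻ z, F a z * ‖z‖ₑ ^ p ∂ν := by
  let c : E → ℝ≥0∞ := fun a => (max (mass F a μ) (mass F a ν))⁻¹
  let P : E → Measure (E × E) := fun a => (μ.withDensity (F a)).prod (ν.withDensity (F a))
  let π0 : Measure (E × E) := ∑ a ∈ s, c a • P a
  have hsμ : ∀ a, SigmaFinite (μ.withDensity (F a)) := fun a =>
    SigmaFinite.withDensity_of_ne_top (ae_of_all _ (hFt a))
  have hsν : ∀ a, SigmaFinite (ν.withDensity (F a)) := fun a =>
    SigmaFinite.withDensity_of_ne_top (ae_of_all _ (hFt a))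
  have hmν : ∀ ρ : Measure E, ∀ a, ρ.withDensity (F a) Set.univ = mass F a ρ := fun ρ a => by
    rw [withDensity_apply _ MeasurableSet.univ, setLIntegral_univ]; rfl
  have hfst : π0.map Prod.fst = ∑ a ∈ s, (c a * mass F a ν) • μ.withDensity (F a) := by
    simp only [π0]
    rw [Measure.map_finset_sum measurable_fst.aemeasurable]
    refine Finset.sum_congr rfl fun a _ => ?_
    rw [Measure.map_smul, Measure.map_fst_prod, hmν, smul_smul]
  have hsnd : π0.map Prod.snd = ∑ a ∈ s, (c a * mass F a μ) • ν.withDensity (F a) := by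
    simp only [π0]
    rw [Measure.map_finset_sum measurable_snd.aemeasurable]
    refine Finset.sum_congr rfl fun a _ => ?_
    rw [Measure.map_smul, Measure.map_snd_prod, hmν, smul_smul]
  have hc1 : ∀ a, c a * mass F a ν ≤ 1 := fun a => by
    refine le_trans ?_ (ENNReal.inv_mul_le_one (max (mass F a μ) (mass F a ν)))
    exact mul_le_mul_right (le_max_right _ _) _
  have hc2 : ∀ a, c a * mass F a μ ≤ 1 := fun a => by
    refine le_trans ?_ (ENNReal.inv_mul_le_one (max (mass F a μ) (mass F a ν)))
    exact mul_le_mul_right (le_max_left _ _) _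
  have hle1 : π0.map Prod.fst ≤ μ := by
    rw [hfst]; exact sum_smul_withDensity_le s F hF hF1 _ hc1 μ
  have hle2 : π0.map Prod.snd ≤ ν := by
    rw [hsnd]; exact sum_smul_withDensity_le s F hF hF1 _ hc2 ν
  have hmom : ∀ ρ : Measure E, ∀ a,
      ∫⁻ z, ‖z‖ₑ ^ p ∂(ρ.withDensity (F a)) = ∫⁻ z, F a z * ‖z‖ₑ ^ p ∂ρ := fun ρ a => by
    rw [lintegral_withDensity_eq_lintegral_mul _ (hF a) (meas_enorm_rpow p)]; rfl
  refine ⟨π0, hle1, hle2, ?_, ?_, ?_⟩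
  · have hmc : Measurable fun q : E × E => ‖q.1 - q.2‖ₑ ^ p := by fun_prop
    have hπ1 : π0 Set.univ ≤ 1 := by
      have h1 : π0.map Prod.fst Set.univ = π0 Set.univ := by
        rw [Measure.map_apply measurable_fst MeasurableSet.univ, Set.preimage_univ]
      rw [← h1]
      exact (hle1 Set.univ).trans (by simp)
    calc ∫⁻ q, ‖q.1 - q.2‖ₑ ^ p ∂π0 ≤ ∫⁻ q, D ^ p ∂π0 := by
          simp only [π0]
          rw [lintegral_finsetSum_measure, lintegral_finsetSum_measure]
          refine Finset.sum_le_sum fun a _ => ?_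
          rw [lintegral_smul_measure, lintegral_smul_measure]
          gcongr 1
          simp only [P]
          rw [prod_withDensity (hF a) (hF a)]
          have hmd : Measurable fun z : E × E => F a z.1 * F a z.2 :=
            ((hF a).comp measurable_fst).mul ((hF a).comp measurable_snd)
          rw [lintegral_withDensity_eq_lintegral_mul _ hmd hmc,
            lintegral_withDensity_eq_lintegral_mul _ hmd measurable_const]
          refine lintegral_mono fun q => ?_
          simp only [Pi.mul_apply]
          by_cases h1 : F a q.1 = 0
          · simp [h1]
          by_cases h2 : F a q.2 = 0
          · simp [h2]
          exact mul_le_mul_right (ENNReal.rpow_le_rpow (hD a _ _ h1 h2) (by linarith)) _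
      _ = D ^ p * π0 Set.univ := lintegral_const _
      _ ≤ D ^ p * 1 := by gcongr
      _ = D ^ p := mul_one _
  · rw [← lintegral_map (meas_enorm_rpow p) measurable_fst, hfst, lintegral_finsetSum_measure]
    simp only [lintegral_smul_measure, hmom, smul_eq_mul, c]
  · rw [← lintegral_map (meas_enorm_rpow p) measurable_snd, hsnd, lintegral_finsetSum_measure]
    simp only [lintegral_smul_measure, hmom, smul_eq_mul, c]

lemma lintegral_of_vague {μ : ℕ → Measure E} {μ' : Measure E}
    [∀ n, IsProbabilityMeasure (μ n)] [IsProbabilityMeasure μ']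
    (hv : ∀ g : E → ℝ, Continuous g → HasCompactSupport g →
      Tendsto (fun n => ∫ z, g z ∂(μ n)) atTop (𝓝 (∫ z, g z ∂μ')))
    {g : E → ℝ} (hg : Continuous g) (hgc : HasCompactSupport g) (h0 : ∀ z, 0 ≤ g z) :
    Tendsto (fun n => ∫⁻ z, ENNReal.ofReal (g z) ∂(μ n)) atTop
      (𝓝 (∫⁻ z, ENNReal.ofReal (g z) ∂μ')) := by
  have key : ∀ ρ : Measure E, IsProbabilityMeasure ρ →
      ∫⁻ z, ENNReal.ofReal (g z) ∂ρ = ENNReal.ofReal (∫ z, g z ∂ρ) := fun ρ _ =>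
    (ofReal_integral_eq_lintegral_ofReal (hg.integrable_of_hasCompactSupport hgc)
      (ae_of_all _ h0)).symm
  simp only [fun n => key (μ n) inferInstance, key μ' inferInstance]
  exact ENNReal.tendsto_ofReal (hv g hg hgc)

lemma Wc_tendsto {p : ℝ} (hp : 1 ≤ p) {μ : ℕ → Measure E} {μ' : Measure E}
    [∀ n, IsProbabilityMeasure (μ n)] [IsProbabilityMeasure μ']
    (hμ : ∀ n, mom p (μ n) ≠ ∞) (hμ' : mom p μ' ≠ ∞)
    (hm : Tendsto (fun n => mom p (μ n)) atTop (𝓝 (mom p μ')))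
    (hv : ∀ g : E → ℝ, Continuous g → HasCompactSupport g →
      Tendsto (fun n => ∫ z, g z ∂(μ n)) atTop (𝓝 (∫ z, g z ∂μ'))) :
    Tendsto (fun n => Wc p (μ n) μ') atTop (𝓝 0) := by
  have hp0 : 0 < p := by linarith
  rw [ENNReal.tendsto_nhds_zero]
  intro ε hε
  obtain ⟨e, he0, heε⟩ : ∃ e : ℝ, 0 < e ∧ ENNReal.ofReal e ≤ ε := by
    rcases eq_or_ne ε ∞ with rfl | h
    · exact ⟨1, one_pos, le_top⟩
    · exact ⟨ε.toReal, ENNReal.toReal_pos hε.ne' h, by rw [ENNReal.ofReal_toReal h]⟩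
  let Dr : ℝ := (e / 4) ^ (1 / p)
  have hDr : 0 < Dr := by positivity
  have hDp : ENNReal.ofReal Dr ^ p = ENNReal.ofReal (e / 4) := by
    rw [ENNReal.ofReal_rpow_of_nonneg hDr.le hp0.le]
    simp only [Dr]
    rw [← Real.rpow_mul (by positivity), one_div, inv_mul_cancel₀ hp0.ne', Real.rpow_one]
  let ηr : ℝ := e / 8 / 2 ^ (p - 1)
  have hηr : 0 < ηr := by positivity
  have hηe : (2 : ℝ≥0∞) ^ (p - 1) * (ENNReal.ofReal ηr + ENNReal.ofReal ηr)
      = ENNReal.ofReal (e / 4) := by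
    have h2 : (2 : ℝ≥0∞) ^ (p - 1) = ENNReal.ofReal (2 ^ (p - 1)) := by
      rw [← ENNReal.ofReal_rpow_of_pos two_pos]; simp
    rw [h2, ← ENNReal.ofReal_add hηr.le hηr.le, ← ENNReal.ofReal_mul (by positivity)]
    congr 1
    simp only [ηr]
    have : (2 : ℝ) ^ (p - 1) ≠ 0 := by positivity
    field_simp
    ring
  -- compact set carrying most of the moment
  have hmeas := meas_enorm_rpow (E := E) p
  have hfin : IsFiniteMeasure (μ'.withDensity fun z => ‖z‖ₑ ^ p) :=
    isFiniteMeasure_withDensity hμ'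
  obtain ⟨K, -, hK, hKη⟩ := MeasurableSet.univ.exists_isCompact_sdiff_lt
    (μ := μ'.withDensity fun z => ‖z‖ₑ ^ p) (measure_ne_top _ _)
    (ε := ENNReal.ofReal ηr) (by simpa using hηr)
  obtain ⟨s, f, hfc, hfs, hf0, hf1, hfK, hfd⟩ := exists_partition hK (half_pos hDr)
  let F : E → E → ℝ≥0∞ := fun a z => ENNReal.ofReal (f a z)
  have hF : ∀ a, Measurable (F a) := fun a => (hfc a).measurable.ennreal_ofReal
  have hFsum : ∀ z, ∑ a ∈ s, F a z = ENNReal.ofReal (∑ a ∈ s, f a z) := fun z =>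
    (ENNReal.ofReal_sum_of_nonneg fun a _ => hf0 a z).symm
  have hF1 : ∀ z, ∑ a ∈ s, F a z ≤ 1 := fun z => by
    rw [hFsum, ENNReal.ofReal_le_one]; exact hf1 z
  have hFD : ∀ a z w, F a z ≠ 0 → F a w ≠ 0 → ‖z - w‖ₑ ≤ ENNReal.ofReal Dr :=
    fun a z w hz hw => by
    rw [← ofReal_norm]
    apply ENNReal.ofReal_le_ofReal
    have := hfd a z w (fun h => hz (by simp [F, h])) (fun h => hw (by simp [F, h]))
    linarith
  let X : E → Measure E → ℝ≥0∞ := fun a ρ => ∫⁻ z, F a z * ‖z‖ₑ ^ p ∂ρ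
  have hXle : ∀ a ∈ s, ∀ ρ : Measure E, X a ρ ≤ mom p ρ := fun a ha ρ => by
    refine lintegral_mono fun z => mul_le_of_le_one_left' ?_
    exact (Finset.single_le_sum (f := fun a => F a z) (fun _ _ => zero_le) ha).trans (hF1 z)
  have hX : ∀ a, Tendsto (fun n => X a (μ n)) atTop (𝓝 (X a μ')) := fun a => by
    have h1 : ∀ ρ : Measure E, X a ρ = ∫⁻ z, ENNReal.ofReal (f a z * ‖z‖ ^ p) ∂ρ := fun ρ => by
      simp only [X]
      congr 1
      ext z
      rw [ENNReal.ofReal_mul (hf0 a z), ← ENNReal.ofReal_rpow_of_nonneg (norm_nonneg _) hp0.le,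
        ofReal_norm]
    simp only [h1]
    refine lintegral_of_vague hv ((hfc a).mul (continuous_norm.rpow_const fun _ => Or.inr hp0.le))
      (hfs a).mul_right fun z => mul_nonneg (hf0 a z) (by positivity)
  have hmass : ∀ a, Tendsto (fun n => mass F a (μ n)) atTop (𝓝 (mass F a μ')) := fun a =>
    lintegral_of_vague hv (hfc a) (hfs a) (hf0 a)
  have hmassle : ∀ a ∈ s, mass F a μ' ≠ ∞ := fun a ha => by
    refine ne_top_of_le_ne_top ENNReal.one_ne_top (b := 1) ?_
    calc mass F a μ' ≤ ∫⁻ z, 1 ∂μ' := lintegral_mono fun z =>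
          (Finset.single_le_sum (f := fun a => F a z) (fun _ _ => zero_le) ha).trans (hF1 z)
      _ = 1 := by simp
  have hX0 : ∀ a, mass F a μ' = 0 → X a μ' = 0 := fun a h => by
    have h1 := (lintegral_eq_zero_iff (hF a)).1 h
    refine (lintegral_eq_zero_iff ((hF a).mul hmeas)).2 ?_
    filter_upwards [h1] with z hz
    simp only [Pi.zero_apply] at hz
    change F a z * ‖z‖ₑ ^ p = 0
    rw [hz, zero_mul]
  let T : ℝ≥0∞ := ∑ a ∈ s, X a μ'
  have hmax : ∀ a, Tendsto (fun n => (max (mass F a (μ n)) (mass F a μ'))⁻¹) atTop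
      (𝓝 (mass F a μ')⁻¹) := fun a => by
    have := ((hmass a).max (tendsto_const_nhds (x := mass F a μ'))).inv
    simpa using this
  have hA : Tendsto (fun n => ∑ a ∈ s, ((max (mass F a (μ n)) (mass F a μ'))⁻¹ * mass F a μ') *
        X a (μ n)) atTop (𝓝 T) := by
    refine tendsto_finsetSum _ fun a ha => ?_
    by_cases h : mass F a μ' = 0
    · simp [h, hX0 a h]
    · have h1 : Tendsto (fun n => (max (mass F a (μ n)) (mass F a μ'))⁻¹ * mass F a μ') atTop
          (𝓝 1) := by
        have := ENNReal.Tendsto.mul_const (b := mass F a μ') (hmax a) (Or.inr (hmassle a ha))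
        rwa [ENNReal.inv_mul_cancel h (hmassle a ha)] at this
      have := ENNReal.Tendsto.mul h1 (Or.inl one_ne_zero) (hX a) (Or.inr ENNReal.one_ne_top)
      rwa [one_mul] at this
  have hB : Tendsto (fun n => ∑ a ∈ s, ((max (mass F a (μ n)) (mass F a μ'))⁻¹ * mass F a (μ n)) *
        X a μ') atTop (𝓝 T) := by
    refine tendsto_finsetSum _ fun a ha => ?_
    by_cases h : mass F a μ' = 0
    · simp [hX0 a h]
    · have h1 : Tendsto (fun n => (max (mass F a (μ n)) (mass F a μ'))⁻¹ * mass F a (μ n)) atTop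
          (𝓝 1) := by
        have := ENNReal.Tendsto.mul (hmax a) (Or.inr (hmassle a ha)) (hmass a)
          (Or.inr (ENNReal.inv_ne_top.2 h))
        rwa [ENNReal.inv_mul_cancel h (hmassle a ha)] at this
      have := ENNReal.Tendsto.mul_const (b := X a μ') h1 (Or.inl one_ne_zero)
      rwa [one_mul] at this
  have hT : mom p μ' - T ≤ ENNReal.ofReal ηr := by
    rw [tsub_le_iff_left]
    have h1 : ∫⁻ z in K, ‖z‖ₑ ^ p ∂μ' ≤ T := by
      have h2 : T = ∫⁻ z, (∑ a ∈ s, F a z) * ‖z‖ₑ ^ p ∂μ' := by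
        simp only [T, X, Finset.sum_mul]
        exact (lintegral_finsetSum s (f := fun a z => F a z * ‖z‖ₑ ^ p)
          fun a _ => (hF a).mul hmeas).symm
      rw [h2]
      refine le_trans ?_ (setLIntegral_le_lintegral K _)
      refine setLIntegral_mono' hK.measurableSet fun z hz => ?_
      rw [hFsum, hfK z hz, ENNReal.ofReal_one, one_mul]
    have h3 : ∫⁻ z in Kᶜ, ‖z‖ₑ ^ p ∂μ' ≤ ENNReal.ofReal ηr := by
      rw [← withDensity_apply _ hK.measurableSet.compl, Set.compl_eq_univ_sdiff]
      exact hKη.le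
    rw [mom, ← lintegral_add_compl _ hK.measurableSet]
    exact add_le_add h1 h3
  have hTtop : T ≠ ∞ := by
    refine ENNReal.sum_ne_top.2 fun a ha => ne_top_of_le_ne_top hμ' (hXle a ha μ')
  have hlim : Tendsto (fun n => ENNReal.ofReal Dr ^ p + (2 : ℝ≥0∞) ^ (p - 1) *
      ((mom p (μ n) - ∑ a ∈ s, ((max (mass F a (μ n)) (mass F a μ'))⁻¹ * mass F a μ') * X a (μ n)) +
       (mom p μ' - ∑ a ∈ s, ((max (mass F a (μ n)) (mass F a μ'))⁻¹ * mass F a (μ n)) * X a μ')))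
      atTop (𝓝 (ENNReal.ofReal Dr ^ p + (2 : ℝ≥0∞) ^ (p - 1) *
        ((mom p μ' - T) + (mom p μ' - T)))) := by
    refine tendsto_const_nhds.add (ENNReal.Tendsto.const_mul ?_ (Or.inr ?_))
    · exact (ENNReal.Tendsto.sub hm hA (Or.inl hμ')).add
        (ENNReal.Tendsto.sub tendsto_const_nhds hB (Or.inl hμ'))
    · exact ENNReal.rpow_ne_top_of_nonneg (by linarith) (by simp)
  have hlt : ENNReal.ofReal Dr ^ p + (2 : ℝ≥0∞) ^ (p - 1) *
        ((mom p μ' - T) + (mom p μ' - T)) < ENNReal.ofReal e := by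
    calc _ ≤ ENNReal.ofReal Dr ^ p + (2 : ℝ≥0∞) ^ (p - 1) *
        (ENNReal.ofReal ηr + ENNReal.ofReal ηr) := by gcongr
      _ = ENNReal.ofReal (e / 4 + e / 4) := by
        rw [hDp, hηe, ENNReal.ofReal_add (by positivity) (by positivity)]
      _ < ENNReal.ofReal e := (ENNReal.ofReal_lt_ofReal_iff he0).2 (by linarith)
  filter_upwards [hlim.eventually_lt_const hlt] with n hn
  obtain ⟨π0, h1, h2, h3, h4, h5⟩ := exists_subcoupling hp (μ n) μ' s F hF hF1
    (fun a z => ENNReal.ofReal_ne_top) hFD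
  refine ((Wc_le hp (hμ n) hμ' π0 h1 h2).trans ?_).trans (hn.le.trans heε)
  rw [h4, h5]
  gcongr

lemma wasserstein_tendsto_of_Wc {p : ℝ} (hp : 1 ≤ p) {μ : ℕ → Measure E} {μ' : Measure E}
    (h : Tendsto (fun n => Wc p (μ n) μ') atTop (𝓝 0)) :
    Tendsto (fun n => wassersteinDist p (μ n) μ') atTop (𝓝 0) := by
  have h1 := ((ENNReal.tendsto_toReal ENNReal.zero_ne_top).comp h).rpow_const
    (p := 1 / p) (Or.inr (by positivity))
  rw [ENNReal.toReal_zero, Real.zero_rpow (by positivity)] at h1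
  exact h1

lemma Wc_subsingleton [Subsingleton E] {p : ℝ} (hp : 1 ≤ p) (μ ν : Measure E)
    [IsProbabilityMeasure μ] [IsProbabilityMeasure ν] : Wc p μ ν = 0 := by
  refine le_antisymm ((iInf₂_le (μ.prod ν) ⟨by simp [Measure.map_fst_prod],
    by simp [Measure.map_snd_prod]⟩).trans ?_) zero_le
  have : ∀ q : E × E, (‖q.1 - q.2‖₊ : ℝ≥0∞) ^ p = 0 := fun q => by
    rw [Subsingleton.elim (q.1 - q.2) 0, nnnorm_zero, ENNReal.coe_zero,
      ENNReal.zero_rpow_of_pos (by linarith)]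
  simp [this]

end final

end QuantAux

open QuantAux

/-- `W_p`-convergence characterization on `ℝ^d`: for probability measures with
finite `p`-th moments, `W_p(μ_n, μ_∞) → 0` iff `e_{N,p}(μ_n, ·) → e_{N,p}(μ_∞, ·)` uniformly
for every `N ≥ 1`, iff `e_{N,p}(μ_n, ·) → e_{N,p}(μ_∞, ·)` pointwise for some
`N ≥ c(d, ‖·‖) + 1` (or `N ≥ d + 2` for a Euclidean norm). -/
theorem stmt7 {E : Type*} [NormedAddCommGroup E] [NormedSpace ℝ E]
    [FiniteDimensional ℝ E] [MeasurableSpace E] [BorelSpace E]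
    (p : ℝ) (hp : 1 ≤ p)
    (μ : ℕ → Measure E) (μ' : Measure E)
    [∀ n, IsProbabilityMeasure (μ n)] [IsProbabilityMeasure μ']
    (hμ : ∀ n, HasFiniteMoment p (μ n)) (hμ' : HasFiniteMoment p μ') :
    (Tendsto (fun n => wassersteinDist p (μ n) μ') atTop (𝓝 0) ↔
      ∀ N : ℕ, 1 ≤ N →
        TendstoUniformly (fun n (x : Fin N → E) => quantErr p N (μ n) x)
          (quantErr p N μ') atTop) ∧
    (Tendsto (fun n => wassersteinDist p (μ n) μ') atTop (𝓝 0) ↔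
      ∃ N : ℕ,
        (coverNum E + 1 ≤ N ∨
          (Nonempty (InnerProductSpace ℝ E) ∧ Module.finrank ℝ E + 2 ≤ N)) ∧
        ∀ x : Fin N → E,
          Tendsto (fun n => quantErr p N (μ n) x) atTop (𝓝 (quantErr p N μ' x))) := by
  have hmom : ∀ n, mom p (μ n) ≠ ∞ := fun n => mom_ne_top (hμ n)
  have hmom' : mom p μ' ≠ ∞ := mom_ne_top hμ'
  have h12 : Tendsto (fun n => wassersteinDist p (μ n) μ') atTop (𝓝 0) →
      ∀ N : ℕ, 1 ≤ N →
        TendstoUniformly (fun n (x : Fin N → E) => quantErr p N (μ n) x)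
          (quantErr p N μ') atTop := fun h N hN => by
    rw [Metric.tendstoUniformly_iff]
    intro ε hε
    filter_upwards [h.eventually_lt_const hε] with n hn x
    rw [dist_comm, Real.dist_eq]
    exact (quantErr_sub_le hN hp (hmom n) hmom' x).trans_lt hn
  have h31 : (∃ N : ℕ,
        (coverNum E + 1 ≤ N ∨
          (Nonempty (InnerProductSpace ℝ E) ∧ Module.finrank ℝ E + 2 ≤ N)) ∧
        ∀ x : Fin N → E,
          Tendsto (fun n => quantErr p N (μ n) x) atTop (𝓝 (quantErr p N μ' x))) →
      Tendsto (fun n => wassersteinDist p (μ n) μ') atTop (𝓝 0) := by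
    rintro ⟨N, hN, hconv⟩
    apply wasserstein_tendsto_of_Wc hp
    rcases subsingleton_or_nontrivial E with hE | hE
    · simp only [Wc_subsingleton hp]
      exact tendsto_const_nhds
    have hN1 : 1 ≤ N := by omega
    have hgood : Good E N := by
      rcases hN with h | ⟨h, h'⟩
      · exact good_coverNum h
      · exact good_inner h h'
    exact Wc_tendsto hp hmom hmom' (mom_of_quantErr hN1 hp hmom hmom' hconv)
      fun g hg hgc => vague_of_quantErr hN1 hp hmom hmom' hgood hconv hg hgc
  have h23 : (∀ N : ℕ, 1 ≤ N →
        TendstoUniformly (fun n (x : Fin N → E) => quantErr p N (μ n) x)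
          (quantErr p N μ') atTop) → (∃ N : ℕ,
        (coverNum E + 1 ≤ N ∨
          (Nonempty (InnerProductSpace ℝ E) ∧ Module.finrank ℝ E + 2 ≤ N)) ∧
        ∀ x : Fin N → E,
          Tendsto (fun n => quantErr p N (μ n) x) atTop (𝓝 (quantErr p N μ' x))) := fun h =>
    ⟨coverNum E + 1, Or.inl le_rfl, fun x => (h _ (by omega)).tendsto_at x⟩
  exact ⟨⟨h12, fun h => h31 (h23 h)⟩, ⟨fun h => h23 (h12 h), h31⟩⟩
end

section
/- (À la Paul Lévy characterization on ℝ^d.) Let p ∈ [1, ∞) and let ‖·‖ be a norm on ℝ^d. Let (μ_n)_{n≥1} be Borel probability measures on ℝ^d with finite p-th moments and let N ≥ c(d, ‖·‖) + 1 (or N ≥ d + 2 if ‖·‖ is induced by an inner product). If e_{N,p}(μ_n, ·) converges pointwise on (ℝ^d)^N to some function f, then there exists a Borel probability measure μ_∞ on ℝ^d with finite p-th moment such that μ_n converges weakly to μ_∞, the limit L := lim_n ∫_{ℝ^d} ‖ξ‖^p dμ_n(dξ) exists and is finite, and f(x)^p = e_{N,p}(μ_∞, x)^p + L − ∫_{ℝ^d}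 ‖ξ‖^p dμ_∞(dξ) for every x ∈ (ℝ^d)^N. -/
open MeasureTheory Filter Topology
open scoped ENNReal NNReal

theorem D_eq {E : Type*} [NormedAddCommGroup E] {N : ℕ} {p : ℝ} (hp : 1 ≤ p) [NeZero N] (x : Fin N → E) (ξ : E) :
    (⨅ i, (‖ξ - x i‖₊ : ℝ≥0∞) ^ p) = ENNReal.ofReal (Metric.infDist ξ (Set.range x) ^ p) := by
  have h0 : 0 < p := by linarith
  have h1 : (⨅ i, (‖ξ - x i‖₊ : ℝ≥0∞) ^ p) = (⨅ i, (‖ξ - x i‖₊ : ℝ≥0∞)) ^ p :=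
    ((ENNReal.orderIsoRpow p h0).map_iInf (fun i => (‖ξ - x i‖₊ : ℝ≥0∞))).symm
  have h2 : (⨅ i, (‖ξ - x i‖₊ : ℝ≥0∞)) = Metric.infEDist ξ (Set.range x) := by
    rw [Metric.infEDist, iInf_range]
    simp only [edist_eq_enorm_sub]; rfl
  rw [h1, h2, ← ENNReal.ofReal_rpow_of_nonneg Metric.infDist_nonneg h0.le, Metric.infDist, ENNReal.ofReal_toReal]
  exact Metric.infEDist_ne_top (Set.range_nonempty x)

theorem rpow_cmp {p : ℝ} (hp : 1 ≤ p) {K ε : ℝ} (hε : 0 < ε) :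
    ∃ C : ℝ, ∀ u v : ℝ, 0 ≤ u → 0 ≤ v → |u - v| ≤ K → |u ^ p - v ^ p| ≤ C + ε * v ^ p := by
  have hc : ContinuousAt (fun t : ℝ => t ^ p) 1 := Real.continuousAt_rpow_const 1 p (by simp)
  obtain ⟨δ, hδ, h⟩ := Metric.continuousAt_iff.1 hc ε hε
  set T := |K| / (δ / 2) + 1 with hT
  have hTpos : 0 < T := by positivity
  refine ⟨(T + |K|) ^ p, fun u v hu hv huv => ?_⟩
  have hp0 : 0 ≤ p := by linarith
  rcases lt_or_ge v T with hvT | hvT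
  · have h1 : u ≤ T + |K| := by
      have := (abs_le.1 (huv.trans (le_abs_self K))).2; linarith
    have h2 : u ^ p ≤ (T + |K|) ^ p := Real.rpow_le_rpow hu h1 hp0
    have h3 : v ^ p ≤ (T + |K|) ^ p := Real.rpow_le_rpow hv (by linarith [abs_nonneg K]) hp0
    have h4 := Real.rpow_nonneg hu p
    have h5 := Real.rpow_nonneg hv p
    have : |u ^ p - v ^ p| ≤ (T + |K|) ^ p := abs_le.2 ⟨by linarith, by linarith⟩
    nlinarith [mul_nonneg hε.le h5]
  · have hv0 : 0 < v := by linarith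
    have h1 : dist (u / v) 1 < δ := by
      rw [Real.dist_eq, show u / v - 1 = (u - v) / v by field_simp, abs_div, abs_of_pos hv0, div_lt_iff₀ hv0]
      have : |K| ≤ δ / 2 * T := by rw [hT]; field_simp; linarith
      have h6 : |u - v| ≤ |K| := huv.trans (le_abs_self K)
      nlinarith
    have h2 := h h1
    simp only [Real.dist_eq, Real.one_rpow] at h2
    rw [Real.div_rpow hu hv] at h2
    have h5 := Real.rpow_pos_of_pos hv0 p
    rw [show u ^ p / v ^ p - 1 = (u ^ p - v ^ p) / v ^ p by field_simp, abs_div, abs_of_pos h5, div_lt_iff₀ h5] at h2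
    have : 0 ≤ (T + |K|) ^ p := by positivity
    linarith

theorem infDist_cmp {E : Type*} [NormedAddCommGroup E] {S : Set E} (hS : S.Finite) (hne : S.Nonempty) :
    ∃ K, ∀ ξ : E, |Metric.infDist ξ S - ‖ξ‖| ≤ K := by
  refine ⟨Metric.infDist 0 S + ∑ s ∈ hS.toFinset, ‖s‖, fun ξ => ?_⟩
  have hsum : 0 ≤ ∑ s ∈ hS.toFinset, ‖s‖ := Finset.sum_nonneg fun _ _ => norm_nonneg _
  rw [abs_le]; constructor
  · have : ‖ξ‖ - ∑ s ∈ hS.toFinset, ‖s‖ ≤ Metric.infDist ξ S := by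
      rw [Metric.le_infDist hne]
      intro s hs
      have := Finset.single_le_sum (f := fun s : E => ‖s‖) (fun _ _ => norm_nonneg _) (hS.mem_toFinset.2 hs)
      have h2 := norm_sub_norm_le ξ s
      rw [dist_eq_norm]

      linarith
    linarith [Metric.infDist_nonneg (x := (0:E)) (s := S)]
  · have := Metric.infDist_le_infDist_add_dist (x := ξ) (y := 0) (s := S)
    rw [dist_zero_right] at this; linarith

theorem integrable_D {E : Type*} [NormedAddCommGroup E] [MeasurableSpace E] [BorelSpace E] {p : ℝ} (hp : 1 ≤ p)
    {μ : Measure E} [IsProbabilityMeasure μ] (hμ : Integrable (fun ξ => ‖ξ‖ ^ p) μ)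
    {S : Set E} (hS : S.Finite) (hne : S.Nonempty) :
    Integrable (fun ξ => Metric.infDist ξ S ^ p) μ := by
  obtain ⟨K, hK⟩ := infDist_cmp hS hne
  obtain ⟨C, hC⟩ := rpow_cmp hp (K := K) one_pos
  have hc : Continuous (fun ξ : E => Metric.infDist ξ S ^ p) := 
    (Metric.continuous_infDist_pt S).rpow_const fun _ => Or.inr (by linarith)
  refine ((integrable_const C).add (hμ.const_mul 2)).mono' hc.measurable.aestronglyMeasurable ?_
  filter_upwards with ξ
  have := abs_le.1 (hC _ _ Metric.infDist_nonneg (norm_nonneg ξ) (hK ξ))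
  rw [Real.norm_of_nonneg (Real.rpow_nonneg Metric.infDist_nonneg p)]
  simp only [Pi.add_apply]; linarith


theorem trunc_err {E : Type*} [NormedAddCommGroup E] [MeasurableSpace E] [BorelSpace E] {p : ℝ}
    (μ : Measure E) [IsProbabilityMeasure μ] {M η C : ℝ} (hη : 0 ≤ η) (hC0 : 0 ≤ C)
    (hint : Integrable (fun ξ => ‖ξ‖ ^ p) μ) (hM : ∫ ξ, ‖ξ‖ ^ p ∂μ ≤ M)
    (φ : E → ℝ) (hφi : Integrable φ μ)
    (g : BoundedContinuousFunction E ℝ) (hg : ∀ ξ, g ξ = max (-C) (min (φ ξ) C))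
    (hφ : ∀ ξ, |φ ξ| ≤ C + η * ‖ξ‖ ^ p) :
    |∫ ξ, φ ξ ∂μ - ∫ ξ, g ξ ∂μ| ≤ η * M := by
  rw [← integral_sub hφi (g.integrable μ)]
  calc |∫ ξ, (φ ξ - g ξ) ∂μ| ≤ ∫ ξ, |φ ξ - g ξ| ∂μ := abs_integral_le_integral_abs
    _ ≤ ∫ ξ, η * ‖ξ‖ ^ p ∂μ := by
        refine integral_mono (hφi.sub (g.integrable μ)).abs (hint.const_mul η) fun ξ => ?_
        have h1 := abs_le.1 (hφ ξ)
        have h2 : 0 ≤ η * ‖ξ‖ ^ p := by positivity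
        simp only [hg]
        rw [abs_le]
        rcases le_total (φ ξ) C with h | h
        · rw [min_eq_left h]
          rcases le_total (-C) (φ ξ) with h' | h'
          · rw [max_eq_right h']; constructor <;> linarith
          · rw [max_eq_left h']; constructor <;> linarith
        · rw [min_eq_right h, max_eq_right (by linarith)]; constructor <;> linarith
    _ = η * ∫ ξ, ‖ξ‖ ^ p ∂μ := integral_const_mul _ _
    _ ≤ η * M := by gcongr

theorem conv_o {E : Type*} [NormedAddCommGroup E] [MeasurableSpace E] [BorelSpace E] {p : ℝ}
    (μ : ℕ → Measure E) [∀ n, IsProbabilityMeasure (μ n)] (μ' : Measure E) [IsProbabilityMeasure μ']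
    (hw : ∀ g : BoundedContinuousFunction E ℝ,
        Tendsto (fun n => ∫ ξ, g ξ ∂(μ n)) atTop (𝓝 (∫ ξ, g ξ ∂μ'))) {M : ℝ}
    (hint : ∀ n, Integrable (fun ξ => ‖ξ‖ ^ p) (μ n)) (hM : ∀ n, ∫ ξ, ‖ξ‖ ^ p ∂(μ n) ≤ M)
    (hint' : Integrable (fun ξ => ‖ξ‖ ^ p) μ') (hM' : ∫ ξ, ‖ξ‖ ^ p ∂μ' ≤ M)
    (φ : E → ℝ) (hφc : Continuous φ) (hφi : ∀ n, Integrable φ (μ n)) (hφi' : Integrable φ μ')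
    (hφ : ∀ ε : ℝ, 0 < ε → ∃ C : ℝ, ∀ ξ, |φ ξ| ≤ C + ε * ‖ξ‖ ^ p) :
    Tendsto (fun n => ∫ ξ, φ ξ ∂(μ n)) atTop (𝓝 (∫ ξ, φ ξ ∂μ')) := by
  rw [Metric.tendsto_atTop]
  intro ε hε
  have hM0 : 0 ≤ M := (integral_nonneg fun ξ => by positivity).trans hM'
  set η := ε / (4 * (M + 1)) with hηd
  have hη : 0 < η := by positivity
  have hηM : η * M ≤ ε / 4 := by
    rw [hηd, div_mul_eq_mul_div, div_le_div_iff₀ (by positivity) (by norm_num)]; nlinarith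
  obtain ⟨C₀, hC₀⟩ := hφ η hη
  obtain ⟨C, hC0, hC⟩ : ∃ C, 0 ≤ C ∧ ∀ ξ, |φ ξ| ≤ C + η * ‖ξ‖ ^ p :=
    ⟨|C₀|, abs_nonneg _, fun ξ => (hC₀ ξ).trans (by gcongr; exact le_abs_self _)⟩
  obtain ⟨g, hg⟩ : ∃ g : BoundedContinuousFunction E ℝ, ∀ ξ, g ξ = max (-C) (min (φ ξ) C) := by
    refine ⟨BoundedContinuousFunction.ofNormedAddCommGroup (fun ξ => max (-C) (min (φ ξ) C))
      (by fun_prop) C fun ξ => ?_, fun ξ => rfl⟩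
    rw [Real.norm_eq_abs, abs_le]
    exact ⟨le_max_left _ _, max_le (by linarith) (min_le_right _ _)⟩
  obtain ⟨n₀, hn₀⟩ := Metric.tendsto_atTop.1 (hw g) (ε / 4) (by positivity)
  refine ⟨n₀, fun n hn => ?_⟩
  have h1 := abs_le.1 (trunc_err (μ n) hη.le hC0 (hint n) (hM n) φ (hφi n) g hg hC)
  have h2 := abs_le.1 (trunc_err μ' hη.le hC0 hint' hM' φ hφi' g hg hC)
  have h3 := abs_lt.1 (hn₀ n hn)
  rw [Real.dist_eq, abs_lt]
  constructor <;> linarith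

theorem lint_sub {E : Type*} [NormedAddCommGroup E] [NormedSpace ℝ E]
    [FiniteDimensional ℝ E] [MeasurableSpace E] [BorelSpace E] (lam : Measure E) [lam.IsAddHaarMeasure]
    (F : E → ℝ≥0∞) (hF : Measurable F) {r : ℝ} (hr : 0 < r) (ξ : E) :
    ∫⁻ v, F (ξ - r • v) ∂lam = ENNReal.ofReal |(r ^ Module.finrank ℝ E)⁻¹| * ∫⁻ b, F b ∂lam := by
  have h1 : ∫⁻ v, F (ξ - r • v) ∂lam = ∫⁻ w, F (ξ - w) ∂(lam.map (fun x => r • x)) := by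
    rw [lintegral_map (f := fun w => F (ξ - w)) (by fun_prop) (by fun_prop)]
  rw [h1, Measure.map_addHaar_smul lam hr.ne', lintegral_smul_measure, lintegral_sub_left_eq_self F ξ]
  rfl

theorem G_eq {E : Type*} [NormedAddCommGroup E] [NormedSpace ℝ E]
    [FiniteDimensional ℝ E] [MeasurableSpace E] [BorelSpace E] (lam : Measure E) [lam.IsAddHaarMeasure]
    (ψ h : E → ℝ≥0∞) (hψ : Measurable ψ) (hh : Measurable h) (μ : Measure E) [IsProbabilityMeasure μ]
    {r : ℝ} (hr : 0 < r) :
    ∫⁻ z, h (z.1 - r • z.2) * ψ z.2 ∂(μ.prod lam) =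
      ENNReal.ofReal |(r ^ Module.finrank ℝ E)⁻¹| *
        ∫⁻ b, h b * ∫⁻ ξ, ψ (r⁻¹ • (ξ - b)) ∂μ ∂lam := by
  rw [lintegral_prod _ (by fun_prop)]
  have h1 : ∀ ξ : E, ∫⁻ v, h (ξ - r • v) * ψ v ∂lam = ENNReal.ofReal |(r ^ Module.finrank ℝ E)⁻¹| *
      ∫⁻ b, h b * ψ (r⁻¹ • (ξ - b)) ∂lam := by
    intro ξ
    rw [← lint_sub lam (fun b => h b * ψ (r⁻¹ • (ξ - b))) (by fun_prop) hr ξ]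
    simp [smul_smul, hr.ne']
  simp only [h1]
  rw [lintegral_const_mul' _ _ ENNReal.ofReal_ne_top, lintegral_lintegral_swap (by fun_prop)]
  congr 1
  refine lintegral_congr fun b => ?_
  rw [lintegral_const_mul _ (by fun_prop)]

theorem G_lim {E : Type*} [NormedAddCommGroup E] [NormedSpace ℝ E]
    [FiniteDimensional ℝ E] [MeasurableSpace E] [BorelSpace E] (lam : Measure E) [lam.IsAddHaarMeasure]
    (ψ : E → ℝ≥0∞) (h : BoundedContinuousFunction E ℝ≥0) (hψ : Measurable ψ)
    (hψt : ∫⁻ v, ψ v ∂lam ≠ ∞) (μ : Measure E) [IsProbabilityMeasure μ] :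
    Tendsto (fun r : ℝ => ∫⁻ z, (h (z.1 - r • z.2) : ℝ≥0∞) * ψ z.2 ∂(μ.prod lam)) (𝓝[>] 0)
      (𝓝 ((∫⁻ ξ, h ξ ∂μ) * ∫⁻ v, ψ v ∂lam)) := by
  have hhm : Measurable (fun x => (h x : ℝ≥0∞)) := (ENNReal.continuous_coe.comp h.continuous).measurable
  rw [← lintegral_prod_mul (by fun_prop) (by fun_prop)]
  have hψt' : ∀ᵐ z ∂(μ.prod lam), ψ z.2 < ∞ :=
    Measure.quasiMeasurePreserving_snd.ae (ae_lt_top hψ hψt)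
  refine tendsto_lintegral_filter_of_dominated_convergence (fun z => (nndist 0 h : ℝ≥0∞) * ψ z.2) ?_ ?_ ?_ ?_
  · filter_upwards with r
    have : Measurable (fun z : E × E => z.1 - r • z.2) := by fun_prop
    exact (hhm.comp this).mul (by fun_prop)
  · filter_upwards with r
    filter_upwards with z
    gcongr
    have := BoundedContinuousFunction.dist_coe_le_dist (f := 0) (g := h) (z.1 - r • z.2)
    rw [← NNReal.coe_le_coe, coe_nndist]
    simpa [NNReal.dist_eq] using this
  · rw [lintegral_prod _ (by fun_prop)]
    simp only [lintegral_const, measure_univ, mul_one]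
    rw [lintegral_const_mul' _ _ ENNReal.coe_ne_top]
    exact ENNReal.mul_ne_top ENNReal.coe_ne_top hψt
  · filter_upwards [hψt'] with z hz
    refine ENNReal.Tendsto.mul_const ?_ (Or.inr hz.ne)
    refine ENNReal.tendsto_coe.2 ((h.continuous.tendsto _).comp ?_)
    have : Tendsto (fun r : ℝ => z.1 - r • z.2) (𝓝 0) (𝓝 (z.1 - (0:ℝ) • z.2)) := by
      apply Continuous.tendsto; fun_prop
    rw [zero_smul, sub_zero] at this
    exact this.mono_left nhdsWithin_le_nhds

theorem unique_of_bumps {E : Type*} [NormedAddCommGroup E] [NormedSpace ℝ E]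
    [FiniteDimensional ℝ E] [MeasurableSpace E] [BorelSpace E]
    (ψ : E → ℝ) (hψ : Continuous ψ) (hs : HasCompactSupport ψ) (h0 : ∀ x, 0 ≤ ψ x) (hpos : 0 < ψ 0)
    (μ ν : Measure E) [IsProbabilityMeasure μ] [IsProbabilityMeasure ν]
    (heq : ∀ (b : E) (r : ℝ), 0 < r → ∫ ξ, ψ (r⁻¹ • (ξ - b)) ∂μ = ∫ ξ, ψ (r⁻¹ • (ξ - b)) ∂ν) :
    μ = ν := by
  set lam : Measure E := Measure.addHaar
  have hψi : Integrable ψ lam := hψ.integrable_of_hasCompactSupport hs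
  set Ψ : E → ℝ≥0∞ := fun x => ENNReal.ofReal (ψ x) with hΨ
  have hΨm : Measurable Ψ := hψ.measurable.ennreal_ofReal
  have hΨt : ∫⁻ v, Ψ v ∂lam ≠ ∞ := by
    rw [hΨ, ← ofReal_integral_eq_lintegral_ofReal hψi (ae_of_all _ h0)]; exact ENNReal.ofReal_ne_top
  have hΨ0 : ∫⁻ v, Ψ v ∂lam ≠ 0 := by
    rw [hΨ, ← ofReal_integral_eq_lintegral_ofReal hψi (ae_of_all _ h0)]
    have := hψ.integral_pos_of_hasCompactSupport_nonneg_nonzero (μ := lam) hs h0 hpos.ne'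
    exact (ENNReal.ofReal_pos.2 this).ne'
  obtain ⟨K, hK⟩ := hs.exists_bound_of_continuous hψ
  have key : ∀ (ρ : Measure E) [IsProbabilityMeasure ρ] (b : E) (r : ℝ),
      ∫⁻ ξ, Ψ (r⁻¹ • (ξ - b)) ∂ρ = ENNReal.ofReal (∫ ξ, ψ (r⁻¹ • (ξ - b)) ∂ρ) := by
    intro ρ _ b r
    rw [ofReal_integral_eq_lintegral_ofReal _ (ae_of_all _ fun _ => h0 _)]
    have hc : Continuous fun ξ => ψ (r⁻¹ • (ξ - b)) := by fun_prop
    exact Integrable.of_bound hc.measurable.aestronglyMeasurable K (ae_of_all _ fun _ => hK _)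
  refine ext_of_forall_lintegral_eq_of_IsFiniteMeasure fun h => ?_
  have hhm : Measurable (fun x => (h x : ℝ≥0∞)) := (ENNReal.continuous_coe.comp h.continuous).measurable
  have l1 := G_lim lam Ψ h hΨm hΨt μ
  have l2 := G_lim lam Ψ h hΨm hΨt ν
  have : (fun r : ℝ => ∫⁻ z, (h (z.1 - r • z.2) : ℝ≥0∞) * Ψ z.2 ∂(μ.prod lam)) =ᶠ[𝓝[>] 0]
      (fun r : ℝ => ∫⁻ z, (h (z.1 - r • z.2) : ℝ≥0∞) * Ψ z.2 ∂(ν.prod lam)) := by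
    filter_upwards [self_mem_nhdsWithin] with r hr
    rw [G_eq lam Ψ (fun x => (h x : ℝ≥0∞)) hΨm hhm μ hr, G_eq lam Ψ (fun x => (h x : ℝ≥0∞)) hΨm hhm ν hr]
    congr 1
    refine lintegral_congr fun b => ?_
    rw [key, key, heq b r hr]
  have e := tendsto_nhds_unique (l1.congr' this) l2
  exact (ENNReal.mul_left_inj hΨ0 hΨt).1 e

theorem cover_norm {E : Type*} [NormedAddCommGroup E] [NormedSpace ℝ E] [FiniteDimensional ℝ E] :
    ∃ A : Finset E, A.card ≤ coverNum E ∧ (0 : E) ∉ A ∧ ∃ R : ℝ, ∀ ξ : E, R < ‖ξ‖ → ∃ a ∈ A, ‖ξ - a‖ ≤ ‖ξ‖ := by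
  classical
  have hne : {k | ∃ a : Fin k → E, (∀ i, a i ∈ Metric.sphere (0 : E) 1) ∧
      Metric.sphere (0 : E) 1 ⊆ ⋃ i, Metric.closedBall (a i) 1}.Nonempty := by
    have : ProperSpace E := FiniteDimensional.proper ℝ E
    obtain ⟨t, ht, htf, hc⟩ := (isCompact_sphere (0:E) 1).finite_cover_balls one_pos
    refine ⟨htf.toFinset.card, fun i => (htf.toFinset.equivFin.symm i : E), fun i => ht ?_, fun x hx => ?_⟩
    · exact htf.mem_toFinset.1 (htf.toFinset.equivFin.symm i).2
    · obtain ⟨y, hy, hxy⟩ := Set.mem_iUnion₂.1 (hc hx)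
      refine Set.mem_iUnion.2 ⟨htf.toFinset.equivFin ⟨y, htf.mem_toFinset.2 hy⟩, ?_⟩
      simpa using (Metric.mem_ball.1 hxy).le
  obtain ⟨a, ha, hc⟩ := Nat.sInf_mem hne
  refine ⟨Finset.univ.image a, Finset.card_image_le.trans (by simp [coverNum]), ?_, 1, fun ξ hξ => ?_⟩
  · intro h
    obtain ⟨i, -, hi⟩ := Finset.mem_image.1 h
    have := ha i
    rw [hi] at this
    simp at this
  · have hξ0 : 0 < ‖ξ‖ := by linarith
    have hu : ‖ξ‖⁻¹ • ξ ∈ Metric.sphere (0:E) 1 := by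
      simp [norm_smul, hξ0.ne']
    obtain ⟨i, hi⟩ := Set.mem_iUnion.1 (hc hu)
    refine ⟨a i, by simp, ?_⟩
    rw [Metric.mem_closedBall, dist_eq_norm] at hi
    have h1 : ξ - a i = (‖ξ‖ - 1) • (‖ξ‖⁻¹ • ξ) + (‖ξ‖⁻¹ • ξ - a i) := by
      have : ‖ξ‖ • (‖ξ‖⁻¹ • ξ) = ξ := by rw [smul_smul, mul_inv_cancel₀ hξ0.ne', one_smul]
      rw [sub_smul, one_smul, this]; abel
    rw [h1]
    refine (norm_add_le _ _).trans ?_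
    rw [norm_smul, mem_sphere_zero_iff_norm.1 hu, Real.norm_of_nonneg (by linarith)]
    linarith

theorem cover_euclid {E : Type*} [NormedAddCommGroup E] [InnerProductSpace ℝ E] [FiniteDimensional ℝ E] [Nontrivial E] :
    ∃ A : Finset E, A.card ≤ Module.finrank ℝ E + 1 ∧ (0 : E) ∉ A ∧ ∃ R : ℝ, ∀ ξ : E, R < ‖ξ‖ → ∃ a ∈ A, ‖ξ - a‖ ≤ ‖ξ‖ := by
  classical
  set d := Module.finrank ℝ E with hd
  have hdpos : 0 < d := Module.finrank_pos
  let e := stdOrthonormalBasis ℝ E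
  set s : E := ∑ i, e i with hs
  have hes : ∀ i, inner ℝ (e i) s = 1 := by
    intro i
    rw [hs, inner_sum]
    simp [orthonormal_iff_ite.1 e.orthonormal]
  have hs0 : s ≠ 0 := by
    intro h
    have := hes ⟨0, hdpos⟩
    rw [h] at this; simp at this
  refine ⟨insert (-s) (Finset.univ.image e), ?_, ?_, ?_⟩
  · refine (Finset.card_insert_le _ _).trans ?_
    gcongr
    exact Finset.card_image_le.trans (by simp [hd])
  · intro h
    rcases Finset.mem_insert.1 h with h | h
    · exact hs0 (neg_eq_zero.1 h.symm)
    · obtain ⟨i, -, hi⟩ := Finset.mem_image.1 h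
      exact e.orthonormal.ne_zero i hi
  · -- far away points
    set m : ℝ := 1 + ‖s‖ ^ 2 with hm
    refine ⟨d * (d * m), fun ξ hξ => ?_⟩
    have test : ∀ a : E, ‖a‖ ^ 2 ≤ 2 * inner ℝ ξ a → ‖ξ - a‖ ≤ ‖ξ‖ := by
      intro a ha
      have := norm_sub_sq_real ξ a
      exact abs_le_of_sq_le_sq' (by linarith) (norm_nonneg _) |>.2
    by_contra! hcon
    have h1 : ∀ i, inner ℝ ξ (e i) < m := by
      intro i
      by_contra! h
      refine (hcon (e i) (by simp)).not_ge (test _ ?_)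
      rw [e.orthonormal.1 i]
      nlinarith [sq_nonneg ‖s‖]
    have h2 : inner ℝ ξ (-s) < m := by
      by_contra! h
      refine (hcon (-s) (by simp)).not_ge (test _ ?_)
      rw [norm_neg]
      nlinarith [sq_nonneg ‖s‖]
    rw [inner_neg_right, hs, inner_sum] at h2
    have hm0 : 0 < m := by positivity
    have h3 : ∀ i, |inner ℝ ξ (e i)| ≤ d * m := by
      intro i
      have hd1 : (1:ℝ) ≤ d := by exact_mod_cast hdpos
      rw [abs_le]; constructor
      · have := Finset.add_sum_erase Finset.univ (fun j => inner ℝ ξ (e j)) (Finset.mem_univ i)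
        have h4 : ∑ j ∈ Finset.univ.erase i, inner ℝ ξ (e j) ≤ ∑ j ∈ Finset.univ.erase i, m :=
          Finset.sum_le_sum fun j _ => (h1 j).le
        rw [Finset.sum_const, nsmul_eq_mul, Finset.card_erase_of_mem (Finset.mem_univ i), Finset.card_univ,
          Fintype.card_fin, Nat.cast_sub hdpos] at h4
        push_cast at h4
        linarith
      · nlinarith [h1 i]
    have h5 : ‖ξ‖ ≤ d * (d * m) := by
      calc ‖ξ‖ = ‖∑ i, inner ℝ (e i) ξ • e i‖ := by rw [e.sum_repr' ξ]
        _ ≤ ∑ i, ‖inner ℝ (e i) ξ • e i‖ := norm_sum_le _ _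
        _ ≤ ∑ i : Fin d, d * m := by
            refine Finset.sum_le_sum fun i _ => ?_
            rw [norm_smul, e.orthonormal.1 i, mul_one, real_inner_comm]
            exact h3 i
        _ = d * (d * m) := by simp
    linarith

theorem cover_exists {E : Type*} [NormedAddCommGroup E] [NormedSpace ℝ E] [FiniteDimensional ℝ E] [Nontrivial E]
    (N : ℕ) (hN : coverNum E + 1 ≤ N ∨
      (Nonempty (InnerProductSpace ℝ E) ∧ Module.finrank ℝ E + 2 ≤ N)) :
    ∃ A : Finset E, A.card + 1 ≤ N ∧ (0 : E) ∉ A ∧ A.Nonempty ∧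
      ∃ R : ℝ, ∀ ξ : E, R < ‖ξ‖ → ∃ a ∈ A, ‖ξ - a‖ ≤ ‖ξ‖ := by
  obtain ⟨A, h1, h2, R, h3⟩ : ∃ A : Finset E, A.card + 1 ≤ N ∧ (0 : E) ∉ A ∧
      ∃ R : ℝ, ∀ ξ : E, R < ‖ξ‖ → ∃ a ∈ A, ‖ξ - a‖ ≤ ‖ξ‖ := by
    rcases hN with h | ⟨⟨I⟩, h⟩
    · obtain ⟨A, h1, h2⟩ := cover_norm (E := E)
      exact ⟨A, by omega, h2⟩
    · have hpar : ∀ x y : E, ‖x + y‖ * ‖x + y‖ + ‖x - y‖ * ‖x - y‖ = 2 * (‖x‖ * ‖x‖ + ‖y‖ * ‖y‖) :=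
        fun x y => by
          have := @parallelogram_law_with_norm ℝ E _ _ I x y
          simpa only [sq] using this
      obtain ⟨A, h1, h2⟩ := @cover_euclid E _ (InnerProductSpace.ofNorm ℝ hpar) ‹_› _
      refine ⟨A, ?_, h2⟩
      have : A.card ≤ Module.finrank ℝ E + 1 := h1
      omega
  obtain ⟨ξ, hξ⟩ := NormedSpace.exists_lt_norm ℝ E R
  obtain ⟨a, ha, -⟩ := h3 ξ hξ
  exact ⟨A, h1, h2, ⟨a, ha⟩, R, h3⟩

theorem quantErr_pow {E : Type*} [NormedAddCommGroup E] [MeasurableSpace E] [BorelSpace E]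
    {N : ℕ} [NeZero N] {p : ℝ} (hp : 1 ≤ p) (μ : Measure E) (x : Fin N → E) :
    quantErr p N μ x ^ p = ∫ ξ, Metric.infDist ξ (Set.range x) ^ p ∂μ := by
  have h0 : p ≠ 0 := by linarith
  have hc : Continuous (fun ξ : E => Metric.infDist ξ (Set.range x) ^ p) :=
    (Metric.continuous_infDist_pt _).rpow_const fun _ => Or.inr (by linarith)
  rw [quantErr, ← Real.rpow_mul ENNReal.toReal_nonneg, one_div_mul_cancel h0, Real.rpow_one,
    integral_eq_lintegral_of_nonneg_ae (ae_of_all _ fun _ => Real.rpow_nonneg Metric.infDist_nonneg p)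
      hc.measurable.aestronglyMeasurable]
  simp only [D_eq hp]

theorem exists_range_eq {α : Type*} (S : Finset α) (hS : S.Nonempty) {N : ℕ} (hN : S.card ≤ N) :
    ∃ x : Fin N → α, Set.range x = S := by
  obtain ⟨s, hs⟩ := hS
  refine ⟨fun i => if h : (i : ℕ) < S.card then (S.equivFin.symm ⟨i, h⟩ : α) else s, ?_⟩
  ext y
  simp only [Set.mem_range, Finset.mem_coe]
  constructor
  · rintro ⟨i, rfl⟩
    split_ifs with h
    · exact (S.equivFin.symm ⟨i, h⟩).2
    · exact hs
  · intro hy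
    refine ⟨Fin.castLE hN (S.equivFin ⟨y, hy⟩), ?_⟩
    simp

open scoped Pointwise in
theorem infDist_scale {E : Type*} [NormedAddCommGroup E] [NormedSpace ℝ E] (A : Set E) (b ξ : E) {r : ℝ} (hr : 0 < r) :
    Metric.infDist (r⁻¹ • (ξ - b)) A = r⁻¹ * Metric.infDist ξ ((fun a => b + r • a) '' A) := by
  have h1 : (fun a => b + r • a) '' A = (fun y => b + y) '' (r • A) := by
    rw [← Set.image_smul, Set.image_image]
  have h2 : ξ = b + r • (r⁻¹ • (ξ - b)) := by simp [smul_smul, hr.ne']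
  conv_rhs => rw [h1, h2]
  rw [Metric.infDist_image (IsometryEquiv.addLeft b).isometry |> fun h => (h : Metric.infDist (b + _) ((fun y => b + y) '' _) = _), infDist_smul₀ hr.ne',
    Real.norm_of_nonneg hr.le, ← mul_assoc, inv_mul_cancel₀ hr.ne', one_mul]

theorem integrable_of_moment {E : Type*} [NormedAddCommGroup E] [MeasurableSpace E] [BorelSpace E]
    {p : ℝ} (hp : 1 ≤ p) {μ : Measure E} (h : HasFiniteMoment p μ) : Integrable (fun ξ => ‖ξ‖ ^ p) μ := by
  have hc : Continuous (fun ξ : E => ‖ξ‖ ^ p) := continuous_norm.rpow_const fun _ => Or.inr (by linarith)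
  refine ⟨hc.measurable.aestronglyMeasurable, ?_⟩
  rw [hasFiniteIntegral_iff_ofReal (ae_of_all _ fun _ => by positivity)]
  refine lt_of_le_of_lt (le_of_eq ?_) (lt_top_iff_ne_top.2 h)
  refine lintegral_congr fun ξ => ?_
  rw [← ENNReal.ofReal_rpow_of_nonneg (norm_nonneg _) (by linarith), ofReal_norm]
  rfl

/-- Two measures which agree on all quantization differences coincide. -/
theorem unique_limit {E : Type*} [NormedAddCommGroup E] [NormedSpace ℝ E]
    [FiniteDimensional ℝ E] [MeasurableSpace E] [BorelSpace E]
    (p : ℝ) (hp : 1 ≤ p) (N : ℕ)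
    (hN : coverNum E + 1 ≤ N ∨
      (Nonempty (InnerProductSpace ℝ E) ∧ Module.finrank ℝ E + 2 ≤ N))
    (μ : ℕ → ProbabilityMeasure E)
    (hμ : ∀ n, Integrable (fun ξ => ‖ξ‖ ^ p) (μ n : Measure E))
    (hS : ∀ S : Finset E, S.Nonempty → S.card ≤ N →
      ∃ l, Tendsto (fun n => ∫ ξ, Metric.infDist ξ (S : Set E) ^ p ∂(μ n : Measure E)) atTop (𝓝 l))
    (ν₁ ν₂ : ProbabilityMeasure E) (h₁ : MapClusterPt ν₁ atTop μ) (h₂ : MapClusterPt ν₂ atTop μ) : ν₁ = ν₂ := by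
  classical
  have hp0 : 0 < p := by linarith
  rcases subsingleton_or_nontrivial E with hE | hE
  · apply Subtype.ext
    ext s -
    rcases Set.eq_empty_or_nonempty s with rfl | h
    · simp
    · rw [Subsingleton.eq_univ_of_nonempty h]; simp
  obtain ⟨A, hcard, h0A, hAne, R, hR⟩ := cover_exists N hN
  have hAne' : (A : Set E).Nonempty := hAne
  set ψ : E → ℝ := fun η => Metric.infDist η (A : Set E) ^ p - Metric.infDist η (insert 0 A : Set E) ^ p with hψ
  have hDc : ∀ S : Set E, Continuous (fun ξ : E => Metric.infDist ξ S ^ p) := fun S =>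
    (Metric.continuous_infDist_pt _).rpow_const fun _ => Or.inr hp0.le
  have hψc : Continuous ψ := (hDc _).sub (hDc _)
  have hψ0 : ∀ x, 0 ≤ ψ x := fun x => sub_nonneg.2 (Real.rpow_le_rpow Metric.infDist_nonneg
    (Metric.infDist_le_infDist_of_subset (Set.subset_insert _ _) hAne') hp0.le)
  have hψpos : 0 < ψ 0 := by
    have h1 : Metric.infDist (0:E) (insert 0 A : Set E) = 0 := Metric.infDist_zero_of_mem (Set.mem_insert _ _)
    have h2 : 0 < Metric.infDist (0:E) (A : Set E) := by
      rw [← (A.finite_toSet.isClosed).notMem_iff_infDist_pos hAne']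
      exact_mod_cast h0A
    simp only [hψ, h1, Real.zero_rpow hp0.ne', sub_zero]
    positivity
  have hψs : HasCompactSupport ψ := by
    have : ProperSpace E := FiniteDimensional.proper ℝ E
    refine HasCompactSupport.of_support_subset_isCompact (isCompact_closedBall (0:E) R) fun x hx => ?_
    by_contra hxR
    rw [mem_closedBall_zero_iff, not_le] at hxR
    obtain ⟨a, ha, hle⟩ := hR x hxR
    apply hx
    refine le_antisymm (sub_nonpos.2 (Real.rpow_le_rpow Metric.infDist_nonneg ?_ hp0.le)) (hψ0 x)
    rw [Metric.le_infDist (Set.insert_nonempty _ _)]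
    intro y hy
    rcases hy with rfl | hy
    · refine (Metric.infDist_le_dist_of_mem (Finset.mem_coe.2 ha)).trans ?_
      rw [dist_eq_norm, dist_zero_right]; exact hle
    · exact Metric.infDist_le_dist_of_mem hy
  obtain ⟨K, hK⟩ := hψs.exists_bound_of_continuous hψc
  apply Subtype.ext
  have i₁ : IsProbabilityMeasure (ν₁ : Measure E) := ν₁.2
  have i₂ : IsProbabilityMeasure (ν₂ : Measure E) := ν₂.2
  refine unique_of_bumps ψ hψc hψs hψ0 hψpos (ν₁ : Measure E) (ν₂ : Measure E) fun b r hr => ?_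
  set g : BoundedContinuousFunction E ℝ := BoundedContinuousFunction.ofNormedAddCommGroup
    (fun ξ => ψ (r⁻¹ • (ξ - b))) (by fun_prop) K (fun _ => hK _) with hg
  set S₁ : Finset E := A.image (fun a => b + r • a) with hS₁
  have hS₁ne : S₁.Nonempty := hAne.image _
  have hS₁c : S₁.card ≤ A.card := Finset.card_image_le
  obtain ⟨l₁, hl₁⟩ := hS S₁ hS₁ne (by omega)
  obtain ⟨l₂, hl₂⟩ := hS (insert b S₁) (Finset.insert_nonempty _ _)
    ((Finset.card_insert_le _ _).trans (by omega))
  have hgl : Tendsto (fun n => ∫ ξ, g ξ ∂(μ n : Measure E)) atTop (𝓝 ((r⁻¹) ^ p * (l₁ - l₂))) := by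
    refine ((hl₁.sub hl₂).const_mul ((r⁻¹) ^ p)).congr fun n => ?_
    rw [← integral_sub (integrable_D hp (hμ n) (Finset.finite_toSet _) hS₁ne)
      (integrable_D hp (hμ n) (Finset.finite_toSet _) (Finset.insert_nonempty _ _)), ← integral_const_mul]
    refine integral_congr_ae (ae_of_all _ fun ξ => ?_)
    have e1 : ((S₁ : Finset E) : Set E) = (fun a => b + r • a) '' (A : Set E) := by simp [hS₁]
    have e2 : ((insert b S₁ : Finset E) : Set E) = (fun a => b + r • a) '' (insert 0 A : Set E) := by
      rw [Set.image_insert_eq]; simp [hS₁]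
    change (r⁻¹) ^ p * (_ - _) = ψ (r⁻¹ • (ξ - b))
    simp only [hψ]
    rw [infDist_scale _ b ξ hr, infDist_scale _ b ξ hr, Real.mul_rpow (by positivity) Metric.infDist_nonneg,
      Real.mul_rpow (by positivity) Metric.infDist_nonneg, e1, e2]
    ring
  have huniq : ∀ ν : ProbabilityMeasure E, MapClusterPt ν atTop μ →
      ∫ ξ, g ξ ∂(ν : Measure E) = (r⁻¹) ^ p * (l₁ - l₂) := by
    intro ν hν
    have hcont : Tendsto (fun ρ : ProbabilityMeasure E => ∫ ξ, g ξ ∂(ρ : Measure E)) (𝓝 ν)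
        (𝓝 (∫ ξ, g ξ ∂(ν : Measure E))) :=
      ProbabilityMeasure.tendsto_iff_forall_integral_tendsto.1 tendsto_id g
    have hcl := hν.tendsto_comp hcont
    have : ClusterPt (∫ ξ, g ξ ∂(ν : Measure E)) (𝓝 ((r⁻¹) ^ p * (l₁ - l₂))) := hcl.clusterPt.mono hgl
    exact eq_of_nhds_neBot this
  exact (huniq ν₁ h₁).trans (huniq ν₂ h₂).symm

theorem tight_of_moment {E : Type*} [NormedAddCommGroup E] [NormedSpace ℝ E]
    [FiniteDimensional ℝ E] [MeasurableSpace E] [BorelSpace E]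
    (p : ℝ) (hp : 1 ≤ p) (S : Set (Measure E)) {M : ℝ} (hM0 : 0 ≤ M)
    (hS : ∀ μ ∈ S, IsProbabilityMeasure μ ∧ Integrable (fun ξ => ‖ξ‖ ^ p) μ ∧ ∫ ξ, ‖ξ‖ ^ p ∂μ ≤ M) :
    IsTightMeasureSet S := by
  have : ProperSpace E := FiniteDimensional.proper ℝ E
  apply isTightMeasureSet_of_tendsto_measure_norm_gt
  have hlim : Tendsto (fun r : ℝ => ENNReal.ofReal (M / r)) atTop (𝓝 0) := by
    rw [← ENNReal.ofReal_zero]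
    exact ENNReal.tendsto_ofReal (tendsto_const_nhds.div_atTop tendsto_id)
  refine tendsto_of_tendsto_of_tendsto_of_le_of_le' tendsto_const_nhds hlim
    (Eventually.of_forall fun _ => bot_le) ?_
  filter_upwards [eventually_ge_atTop 1] with r hr
  refine iSup₂_le fun μ hμ => ?_
  obtain ⟨hpr, hi, hm⟩ := hS μ hμ
  have h1 := mul_meas_ge_le_integral_of_nonneg (ae_of_all μ fun ξ : E => (by positivity : 0 ≤ ‖ξ‖ ^ p)) hi r
  have h2 : μ {x | r < ‖x‖} ≤ μ {x | r ≤ ‖x‖ ^ p} := by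
    refine measure_mono fun x hx => ?_
    have hx' : r < ‖x‖ := hx
    exact hx'.le.trans (Real.self_le_rpow_of_one_le (by linarith) hp)
  refine h2.trans ?_
  rw [← ofReal_measureReal]
  refine ENNReal.ofReal_le_ofReal ?_
  rw [le_div_iff₀ (by linarith)]
  linarith

/-- à la Paul Lévy characterization on `ℝ^d`: if `e_{N,p}(μ_n, ·)` converges
pointwise to `f` for some `N ≥ c(d, ‖·‖) + 1` (or `N ≥ d + 2` for a Euclidean norm), then
`μ_n` converges weakly to some probability measure `μ_∞` with finite `p`-th moment, the
`p`-th moments of `μ_n` converge to some finite `L`, and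
`f^p = e_{N,p}(μ_∞, ·)^p + L − ∫ ‖ξ‖^p dμ_∞`. -/
theorem stmt8 {E : Type*} [NormedAddCommGroup E] [NormedSpace ℝ E]
    [FiniteDimensional ℝ E] [MeasurableSpace E] [BorelSpace E]
    (p : ℝ) (hp : 1 ≤ p) (N : ℕ)
    (hN : coverNum E + 1 ≤ N ∨
      (Nonempty (InnerProductSpace ℝ E) ∧ Module.finrank ℝ E + 2 ≤ N))
    (μ : ℕ → Measure E) [∀ n, IsProbabilityMeasure (μ n)]
    (hμ : ∀ n, HasFiniteMoment p (μ n))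
    (f : (Fin N → E) → ℝ)
    (hf : ∀ x : Fin N → E, Tendsto (fun n => quantErr p N (μ n) x) atTop (𝓝 (f x))) :
    ∃ μ' : Measure E, IsProbabilityMeasure μ' ∧ HasFiniteMoment p μ' ∧
      (∀ g : BoundedContinuousFunction E ℝ,
        Tendsto (fun n => ∫ ξ, g ξ ∂(μ n)) atTop (𝓝 (∫ ξ, g ξ ∂μ'))) ∧
      ∃ L : ℝ, Tendsto (fun n => ∫ ξ, ‖ξ‖ ^ p ∂(μ n)) atTop (𝓝 L) ∧
        ∀ x : Fin N → E,
          f x ^ p = quantErr p N μ' x ^ p + L - ∫ ξ, ‖ξ‖ ^ p ∂μ' := by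
  have hN0 : NeZero N := ⟨by rcases hN with h | ⟨_, h⟩ <;> omega⟩
  have hp0 : 0 < p := by linarith
  have hint : ∀ n, Integrable (fun ξ => ‖ξ‖ ^ p) (μ n) := fun n => integrable_of_moment hp (hμ n)
  have hfp : ∀ x : Fin N → E, Tendsto (fun n => ∫ ξ, Metric.infDist ξ (Set.range x) ^ p ∂(μ n)) atTop
      (𝓝 (f x ^ p)) := by
    intro x
    refine ((hf x).rpow_const (Or.inr hp0.le)).congr fun n => quantErr_pow hp _ _
  have hL : Tendsto (fun n => ∫ ξ, ‖ξ‖ ^ p ∂(μ n)) atTop (𝓝 (f (fun _ => 0) ^ p)) := by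
    refine (hfp fun _ => 0).congr fun n => ?_
    simp [Set.range_const, Metric.infDist_singleton]
  obtain ⟨M, hM⟩ := hL.bddAbove_range
  have hM : ∀ n, ∫ ξ, ‖ξ‖ ^ p ∂(μ n) ≤ M := fun n => hM ⟨n, rfl⟩
  have hM0 : 0 ≤ M := (integral_nonneg fun ξ => by positivity).trans (hM 0)
  set ν : ℕ → ProbabilityMeasure E := fun n => ⟨μ n, inferInstance⟩ with hν
  have htight := tight_of_moment p hp {x : Measure E | ∃ ρ ∈ Set.range ν, (ρ : Measure E) = x} hM0 (by
    rintro _ ⟨_, ⟨n, rfl⟩, rfl⟩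
    exact ⟨inferInstance, hint n, hM n⟩)
  have hK := isCompact_closure_of_isTightMeasureSet htight
  have hmem : ∀ n, ν n ∈ closure (Set.range ν) := fun n => subset_closure ⟨n, rfl⟩
  obtain ⟨ν', -, hν'⟩ := hK.exists_mapClusterPt (f := atTop) (u := ν)
    (tendsto_principal.2 (Eventually.of_forall hmem))
  have hS : ∀ S : Finset E, S.Nonempty → S.card ≤ N →
      ∃ l, Tendsto (fun n => ∫ ξ, Metric.infDist ξ (S : Set E) ^ p ∂(ν n : Measure E)) atTop (𝓝 l) := by
    intro S hSne hSc
    obtain ⟨x, hx⟩ := exists_range_eq S hSne hSc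
    exact ⟨_, hx ▸ hfp x⟩
  have hlim : Tendsto ν atTop (𝓝 ν') := hK.tendsto_nhds_of_unique_mapClusterPt
    (Eventually.of_forall hmem) fun ρ _ hρ => unique_limit p hp N hN ν hint hS ρ ν' hρ hν'
  have hw := ProbabilityMeasure.tendsto_iff_forall_integral_tendsto.1 hlim
  have hc : Continuous (fun ξ : E => ‖ξ‖ ^ p) := continuous_norm.rpow_const fun _ => Or.inr hp0.le
  have hfatou : ∫⁻ ξ, ENNReal.ofReal (‖ξ‖ ^ p) ∂(ν' : Measure E) ≤ ENNReal.ofReal M := by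
    have h1 := lintegral_le_liminf_lintegral_of_forall_isOpen_measure_le_liminf_measure
      (μ := (ν' : Measure E)) (μs := μ) hc (fun ξ => by positivity)
      (fun G hG => ProbabilityMeasure.le_liminf_measure_open_of_tendsto hlim hG)
    refine h1.trans ?_
    refine liminf_le_of_frequently_le' (Frequently.of_forall fun n => ?_)
    rw [← ofReal_integral_eq_lintegral_ofReal (hint n) (ae_of_all _ fun _ => by positivity)]
    exact ENNReal.ofReal_le_ofReal (hM n)
  have hmom : HasFiniteMoment p (ν' : Measure E) := by
    refine ne_of_lt (lt_of_le_of_lt (le_of_eq ?_) (hfatou.trans_lt ENNReal.ofReal_lt_top))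
    refine lintegral_congr fun ξ => ?_
    rw [← ENNReal.ofReal_rpow_of_nonneg (norm_nonneg _) hp0.le, ofReal_norm]
    rfl
  have hint' := integrable_of_moment hp hmom
  have hM' : ∫ ξ, ‖ξ‖ ^ p ∂(ν' : Measure E) ≤ M := by
    rw [← ofReal_integral_eq_lintegral_ofReal hint' (ae_of_all _ fun _ => by positivity)] at hfatou
    exact (ENNReal.ofReal_le_ofReal_iff hM0).1 hfatou
  refine ⟨ν', inferInstance, hmom, hw, _, hL, fun x => ?_⟩
  have hfin : (Set.range x).Finite := Set.finite_range x
  have hne : (Set.range x).Nonempty := Set.range_nonempty x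
  have hφ := conv_o (p := p) μ (ν' : Measure E) hw hint hM hint' hM'
    (fun ξ => Metric.infDist ξ (Set.range x) ^ p - ‖ξ‖ ^ p)
    (((Metric.continuous_infDist_pt _).rpow_const fun _ => Or.inr hp0.le).sub hc)
    (fun n => (integrable_D hp (hint n) hfin hne).sub (hint n))
    ((integrable_D hp hint' hfin hne).sub hint')
    (by
      intro ε hε
      obtain ⟨K, hK⟩ := infDist_cmp hfin hne
      obtain ⟨C, hC⟩ := rpow_cmp hp (K := K) hε
      exact ⟨C, fun ξ => hC _ _ Metric.infDist_nonneg (norm_nonneg ξ) (hK ξ)⟩)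
  rw [integral_sub (integrable_D hp hint' hfin hne) hint'] at hφ
  have hφ2 : Tendsto (fun n => ∫ ξ, (Metric.infDist ξ (Set.range x) ^ p - ‖ξ‖ ^ p) ∂(μ n)) atTop
      (𝓝 (f x ^ p - f (fun _ => 0) ^ p)) := by
    refine ((hfp x).sub hL).congr fun n => ?_
    rw [integral_sub (integrable_D hp (hint n) hfin hne) (hint n)]
  have := tendsto_nhds_unique hφ hφ2
  rw [quantErr_pow hp]
  linarith
end
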